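/- The irregular locus of the commuting variety has codimension at most 4: codim_C C^irr ≤ 4; in fact C^irr has an irreducible component of dimension exactly dim g + rk g − 4 (for a Cartan subalgebra t of g and a root α of g with respect to t, the closure of the union of the adjoint-group translates of Ker α × Ker α ⊆ t × t is such a component). -/

import Mathlib

noncomputable section

namespace CV

variable (k : Type*) [Field k] (V : Type*) [AddCommGroup V] [Module k V] [FiniteDimensional k V]

/-- Coordinates with respect to a chosen basis of `V`. -/
def coordFn (z : V) (i : Module.Free.ChooseBasisIndex k V) : k :=
  (Module.Free.chooseBasis k V).repr z i

/-- Evaluation of a polynomial (in the chosen coordinates) at a point of `V`. -/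
def evalP (F : MvPolynomial (Module.Free.ChooseBasisIndex k V) k) (z : V) : k :=
  MvPolynomial.aeval (coordFn k V z) F

/-- The Zariski topology on `V`: generated by complements of zero sets of polynomial
functions. -/
def zar : TopologicalSpace V :=
  TopologicalSpace.generateFrom
    {U | ∃ F : MvPolynomial (Module.Free.ChooseBasisIndex k V) k, U = {z | evalP k V F z ≠ 0}}

/-- The dimension of a subset of `V`:  the Krull dimension for the topology induced by the
Zariski topology of `V`. -/
def dimSet (S : Set V) : WithBot ℕ∞ :=
  @topologicalKrullDim S (TopologicalSpace.induced Subtype.val (zar k V))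

/-- The differential at `z ∈ V` of a polynomial `F`, as a linear functional on `V`. -/
def diffAt (F : MvPolynomial (Module.Free.ChooseBasisIndex k V) k) (z : V) : V →ₗ[k] k :=
  (Module.Free.chooseBasis k V).constr k fun i => evalP k V (MvPolynomial.pderiv i F) z

/-- The Zariski tangent space at `z` of a subset `S ⊆ V`:  the common kernel of the
differentials at `z` of all polynomial functions vanishing identically on `S`. -/
def tangent (S : Set V) (z : V) : Submodule k V :=
  ⨅ F ∈ {F | ∀ w ∈ S, evalP k V F w = 0}, LinearMap.ker (diffAt k V F z)

end CV

/-- The commuting variety `C = {(x,y) ∈ g × g | [x,y] = 0}`. -/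
def commSet (k : Type*) (g : Type*) [Field k] [LieRing g] [LieAlgebra k g] : Set (g × g) :=
  {p | ⁅p.1, p.2⁆ = 0}

/-- The centralizer `g_x = {y ∈ g | [x,y] = 0}` of an element `x` of a Lie algebra,
as a submodule. -/
def cent (k : Type*) {g : Type*} [Field k] [LieRing g] [LieAlgebra k g] (x : g) :
    Submodule k g := LinearMap.ker (LieAlgebra.ad k g x)

variable (k : Type*) [Field k] [IsAlgClosed k] [CharZero k]
variable (g : Type*) [LieRing g] [LieAlgebra k g] [FiniteDimensional k g]

/-- The irregular locus of the commuting variety:  points `(x,y) ∈ C` with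
`dim (g_x ∩ g_y) > rk g`. -/
def Cirr (t : LieSubalgebra k g) : Set (g × g) :=
  {z ∈ commSet k g | Module.finrank k ↥t < Module.finrank k ↥(cent k z.1 ⊓ cent k z.2)}

/-- The exponential of a (nilpotent) endomorphism of `g`. -/
def expEnd (f : Module.End k g) : Module.End k g :=
  ∑ i ∈ Finset.range (Module.finrank k g + 1), (i.factorial : k)⁻¹ • f ^ i

/-- The adjoint group of `g`, realized as the subgroup of `GL(g)` generated by the
exponentials `exp (ad x)` of the nilpotent inner derivations of `g`. -/
def adjointGroup : Subgroup (Module.End k g)ˣ :=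
  Subgroup.closure {u : (Module.End k g)ˣ |
    ∃ x : g, IsNilpotent (LieAlgebra.ad k g x) ∧
      (u : Module.End k g) = expEnd k g (LieAlgebra.ad k g x)}

/-- The set of translates `G (S) ⊆ g × g` of a subset `S ⊆ g × g` under the (diagonal)
action of the adjoint group `G` of `g`. -/
def adTranslates (S : Set (g × g)) : Set (g × g) :=
  {p | ∃ u ∈ adjointGroup k g, ∃ s ∈ S,
    p = ((u : Module.End k g) s.1, (u : Module.End k g) s.2)}

/-- The root space `g^α` of `α ∈ t*`:  the simultaneous eigenspace
`{x ∈ g | [h,x] = α(h) • x  for all h ∈ t}`. -/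
def eigSp (t : LieSubalgebra k g) (α : Module.Dual k ↥t) : Submodule k g where
  carrier := {x | ∀ h : ↥t, ⁅(h : g), x⁆ = α h • x}
  add_mem' := fun {a b} ha hb h => by rw [lie_add, ha h, hb h, smul_add]
  zero_mem' := fun h => by rw [lie_zero, smul_zero]
  smul_mem' := fun c x hx h => by rw [lie_smul, hx h, smul_comm]

/-- `α ∈ t*` is a root of `g` with respect to `t`. -/
def IsRootOf (t : LieSubalgebra k g) (α : Module.Dual k ↥t) : Prop :=
  α ≠ 0 ∧ eigSp k g t α ≠ ⊥

/-- `Ker α ⊆ t`, viewed as a submodule of `g`. -/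
def kerRoot (t : LieSubalgebra k g) (α : Module.Dual k ↥t) : Submodule k g :=
  Submodule.map t.incl.toLinearMap (LinearMap.ker (α : ↥t →ₗ[k] k))

section P1
open scoped Topology
set_option linter.unusedSectionVars false
set_option linter.style.haveILetI false
variable {k : Type*} [Field k] [IsAlgClosed k] [CharZero k]

namespace CV

variable {V : Type*} [AddCommGroup V] [Module k V] [FiniteDimensional k V]
variable {W : Type*} [AddCommGroup W] [Module k W] [FiniteDimensional k W]
variable {U : Type*} [AddCommGroup U] [Module k U] [FiniteDimensional k U]

instance infinite_of_algClosed' : Infinite k := inferInstance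

variable (k V) in
/-- Evaluation of polynomials as an algebra homomorphism to functions. -/
def evalHom : MvPolynomial (Module.Free.ChooseBasisIndex k V) k →ₐ[k] (V → k) :=
  AlgHom.pi (fun z => MvPolynomial.aeval (coordFn k V z))

lemma evalHom_apply (F : MvPolynomial (Module.Free.ChooseBasisIndex k V) k) (z : V) :
    evalHom k V F z = evalP k V F z := rfl

variable (k V) in
/-- The algebra of regular functions. -/
def Reg : Subalgebra k (V → k) := (evalHom k V).range

lemma mem_Reg {f : V → k} : f ∈ Reg k V ↔ ∃ F, evalHom k V F = f := Iff.rfl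

lemma coordFn_equivFun_symm (c : Module.Free.ChooseBasisIndex k V → k) :
    coordFn k V ((Module.Free.chooseBasis k V).equivFun.symm c) = c := by
  funext i
  have := (Module.Free.chooseBasis k V).equivFun.apply_symm_apply c
  exact congrFun this i

lemma coordFn_symm (z : V) :
    (Module.Free.chooseBasis k V).equivFun.symm (coordFn k V z) = z :=
  (Module.Free.chooseBasis k V).equivFun.symm_apply_apply z

lemma evalHom_injective : Function.Injective (evalHom k V) := by
  intro F G h
  apply MvPolynomial.funext
  intro c
  have := congrFun h ((Module.Free.chooseBasis k V).equivFun.symm c)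
  simp only [evalHom_apply, evalP, coordFn_equivFun_symm] at this
  simpa [MvPolynomial.aeval_eq_eval] using this

lemma Reg_mul_eq_zero {f g : V → k} (hf : f ∈ Reg k V) (hg : g ∈ Reg k V)
    (h : ∀ z, f z * g z = 0) : f = 0 ∨ g = 0 := by
  obtain ⟨F, rfl⟩ := hf
  obtain ⟨G, rfl⟩ := hg
  have : evalHom k V (F * G) = evalHom k V 0 := by
    rw [map_mul, map_zero]; funext z; exact h z
  have := evalHom_injective this
  rcases mul_eq_zero.mp this with h | h
  · left; subst h; exact map_zero _
  · right; subst h; exact map_zero _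

lemma Reg_coord (i : Module.Free.ChooseBasisIndex k V) :
    (fun z => coordFn k V z i) ∈ Reg k V :=
  ⟨MvPolynomial.X i, by
    funext z
    change MvPolynomial.aeval (coordFn k V z) (MvPolynomial.X i) = _
    simp⟩

lemma Reg_const (c : k) : (fun _ : V => c) ∈ Reg k V := (Reg k V).algebraMap_mem c

lemma Reg_add {f g : V → k} (hf : f ∈ Reg k V) (hg : g ∈ Reg k V) :
    (fun z => f z + g z) ∈ Reg k V := (Reg k V).add_mem hf hg

lemma Reg_mul {f g : V → k} (hf : f ∈ Reg k V) (hg : g ∈ Reg k V) :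
    (fun z => f z * g z) ∈ Reg k V := (Reg k V).mul_mem hf hg

lemma Reg_sum {ι : Type*} (s : Finset ι) {f : ι → V → k} (hf : ∀ i ∈ s, f i ∈ Reg k V) :
    (fun z => ∑ i ∈ s, f i z) ∈ Reg k V := by
  have := (Reg k V).sum_mem (t := s) (f := f) hf
  convert this using 1
  funext z; simp

lemma Reg_prod {ι : Type*} (s : Finset ι) {f : ι → V → k} (hf : ∀ i ∈ s, f i ∈ Reg k V) :
    (fun z => ∏ i ∈ s, f i z) ∈ Reg k V := by
  have := (Reg k V).prod_mem (t := s) (f := f) hf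
  convert this using 1
  funext z; simp

lemma dual_eq_sum (φ : Module.Dual k V) (z : V) :
    φ z = ∑ i, coordFn k V z i * φ (Module.Free.chooseBasis k V i) := by
  have h := congrArg φ ((Module.Free.chooseBasis k V).sum_repr z)
  rw [← h, map_sum]
  refine Finset.sum_congr rfl fun i _ => ?_
  rw [map_smul, smul_eq_mul]
  rfl

lemma Reg_dual (φ : Module.Dual k V) : (fun z => φ z) ∈ Reg k V := by
  have : (fun z => φ z) = fun z => ∑ i, coordFn k V z i * φ (Module.Free.chooseBasis k V i) := by
    funext z; exact dual_eq_sum φ z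
  rw [this]
  exact Reg_sum _ fun i _ => Reg_mul (Reg_coord i) (Reg_const _)

/-- Induction principle. -/
lemma Reg_induction {P : (V → k) → Prop} (hc : ∀ c : k, P (fun _ => c))
    (hX : ∀ φ : Module.Dual k V, P (fun z => φ z))
    (hadd : ∀ f g : V → k, f ∈ Reg k V → g ∈ Reg k V → P f → P g → P (fun z => f z + g z))
    (hmul : ∀ f g : V → k, f ∈ Reg k V → g ∈ Reg k V → P f → P g → P (fun z => f z * g z))
    {f : V → k} (hf : f ∈ Reg k V) : P f := by
  obtain ⟨F, rfl⟩ := hf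
  change P (evalHom k V F)
  induction F using MvPolynomial.induction_on with
  | C a =>
    have : evalHom k V (MvPolynomial.C a) = fun _ => a := by
      funext z
      change MvPolynomial.aeval (coordFn k V z) (MvPolynomial.C a) = _
      simp
    rw [this]; exact hc a
  | add p q hp hq => rw [map_add]; exact hadd _ _ ⟨p, rfl⟩ ⟨q, rfl⟩ hp hq
  | mul_X p i hp =>
    rw [map_mul]
    have : evalHom k V (MvPolynomial.X i) =
        fun z => ((Module.Free.chooseBasis k V).coord i) z := by
      funext z
      change MvPolynomial.aeval (coordFn k V z) (MvPolynomial.X i) = _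
      simp [coordFn]
    refine hmul _ _ ⟨p, rfl⟩ ⟨MvPolynomial.X i, rfl⟩ hp ?_
    rw [this]
    exact hX _

variable (k) in
/-- Polynomial maps between finite dimensional vector spaces. -/
def PolyMap (F : W → V) : Prop := ∀ φ : Module.Dual k V, (fun w => φ (F w)) ∈ Reg k W

lemma PolyMap.reg_comp {F : W → V} (hF : PolyMap k F) {f : V → k} (hf : f ∈ Reg k V) :
    (fun w => f (F w)) ∈ Reg k W := by
  refine Reg_induction (P := fun f => (fun w => f (F w)) ∈ Reg k W) ?_ ?_ ?_ ?_ hf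
  · intro c; exact Reg_const c
  · intro φ; exact hF φ
  · intro f g _ _ h1 h2; exact Reg_add h1 h2
  · intro f g _ _ h1 h2; exact Reg_mul h1 h2

lemma polyMap_reg {f : V → k} : PolyMap k f ↔ f ∈ Reg k V := by
  constructor
  · intro h; exact h LinearMap.id
  · intro h φ
    have : (fun w => φ (f w)) = fun w => f w * φ 1 := by
      funext w
      rw [← smul_eq_mul, ← map_smul, smul_eq_mul, mul_one]
    rw [this]
    exact Reg_mul h (Reg_const _)

lemma PolyMap.comp {F : W → V} {G : V → U} (hG : PolyMap k G) (hF : PolyMap k F) :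
    PolyMap k (fun w => G (F w)) := fun φ => hF.reg_comp (hG φ)

lemma PolyMap.linear (A : W →ₗ[k] V) : PolyMap k (fun w => A w) := fun φ => Reg_dual (φ ∘ₗ A)

lemma PolyMap.const (v : V) : PolyMap k (fun _ : W => v) := fun φ => Reg_const (φ v)

lemma PolyMap.id : PolyMap k (fun w : W => w) := PolyMap.linear LinearMap.id

lemma PolyMap.add {F G : W → V} (hF : PolyMap k F) (hG : PolyMap k G) :
    PolyMap k (fun w => F w + G w) := fun φ => by
  simpa only [map_add] using Reg_add (hF φ) (hG φ)

lemma PolyMap.sum {ι : Type*} (s : Finset ι) {F : ι → W → V} (hF : ∀ i ∈ s, PolyMap k (F i)) :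
    PolyMap k (fun w => ∑ i ∈ s, F i w) := fun φ => by
  simpa only [map_sum] using Reg_sum s (fun i hi => hF i hi φ)

lemma PolyMap.eq_sum {F : W → V} (w : W) : F w = ∑ i, coordFn k V (F w) i •
    (Module.Free.chooseBasis k V i) := by
  exact ((Module.Free.chooseBasis k V).sum_repr (F w)).symm

lemma PolyMap.bilin (B : V →ₗ[k] W →ₗ[k] U) {E : Type*} [AddCommGroup E] [Module k E]
    [FiniteDimensional k E] {F : E → V} {G : E → W} (hF : PolyMap k F) (hG : PolyMap k G) :
    PolyMap k (fun w => B (F w) (G w)) := fun φ => by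
  have : (fun w => φ (B (F w) (G w))) = fun w => ∑ i, coordFn k V (F w) i *
      (φ ∘ₗ B (Module.Free.chooseBasis k V i)) (G w) := by
    funext w
    conv_lhs => rw [PolyMap.eq_sum (k := k) (F := F) w]
    simp
  rw [this]
  exact Reg_sum _ fun i _ => Reg_mul (hF.reg_comp (Reg_coord i)) (hG _)

lemma PolyMap.smul {f : W → k} {F : W → V} (hf : PolyMap k f) (hF : PolyMap k F) :
    PolyMap k (fun w => f w • F w) :=
  PolyMap.bilin (LinearMap.lsmul k V) hf hF

lemma PolyMap.prodMk {F : W → V} {G : W → U} (hF : PolyMap k F) (hG : PolyMap k G) :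
    PolyMap k (fun w => (F w, G w)) := fun φ => by
  have : (fun w => φ (F w, G w)) = fun w => (φ ∘ₗ LinearMap.inl k V U) (F w) +
      (φ ∘ₗ LinearMap.inr k V U) (G w) := by
    funext w; simp [← map_add]
  rw [this]; exact Reg_add (hF _) (hG _)

lemma PolyMap.clm_apply {F : W → (V →ₗ[k] U)} {G : W → V} (hF : PolyMap k F) (hG : PolyMap k G) :
    PolyMap k (fun w => F w (G w)) :=
  PolyMap.bilin (LinearMap.id : (V →ₗ[k] U) →ₗ[k] (V →ₗ[k] U)) hF hG

lemma PolyMap.comp_lin {E : Type*} [AddCommGroup E] [Module k E]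
    [FiniteDimensional k E] {F : W → (V →ₗ[k] U)} {G : W → (E →ₗ[k] V)} (hF : PolyMap k F)
    (hG : PolyMap k G) :
    PolyMap k (fun w => F w ∘ₗ G w) :=
  PolyMap.bilin (LinearMap.llcomp k E V U) hF hG

lemma PolyMap.mul_end {F G : W → Module.End k V} (hF : PolyMap k F)
    (hG : PolyMap k G) :
    PolyMap k (fun w => F w * G w) := PolyMap.comp_lin hF hG

lemma PolyMap.pow_end {F : W → Module.End k V} (hF : PolyMap k F) (n : ℕ) :
    PolyMap k (fun w => F w ^ n) := by
  induction n with
  | zero => simpa using PolyMap.const (k := k) (W := W) (1 : Module.End k V)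
  | succ n ih => simpa only [pow_succ] using ih.mul_end hF

/-- A map to linear maps is polynomial as soon as it is pointwise. -/
lemma PolyMap.of_apply {F : W → (V →ₗ[k] U)} (h : ∀ v, PolyMap k (fun w => F w v)) :
    PolyMap k F := by
  let b := Module.Free.chooseBasis k V
  have : F = fun w => ∑ i, (LinearMap.smulRightₗ (b.coord i)) (F w (b i)) := by
    funext w
    apply b.ext
    intro j
    simp [Finsupp.single_apply, Module.Basis.repr_self]
  rw [this]
  exact PolyMap.sum _ fun i _ => (PolyMap.linear _).comp (h (b i))

/-! ### Zariski topology -/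

lemma isOpen_ne_zero {f : V → k} (hf : f ∈ Reg k V) : IsOpen[zar k V] {z | f z ≠ 0} := by
  obtain ⟨F, rfl⟩ := hf
  exact TopologicalSpace.isOpen_generateFrom_of_mem ⟨F, rfl⟩

lemma isClosed_eq_zero {f : V → k} (hf : f ∈ Reg k V) : IsClosed[zar k V] {z | f z = 0} := by
  letI := zar k V
  have := (isOpen_ne_zero hf).isClosed_compl
  convert this using 1
  ext z; simp

lemma isTopologicalBasis_zar :
    @TopologicalSpace.IsTopologicalBasis V (zar k V)
      {U | ∃ f ∈ Reg k V, U = {z | f z ≠ 0}} := by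
  letI := zar k V
  refine ⟨?_, ?_, ?_⟩
  · rintro _ ⟨f, hf, rfl⟩ _ ⟨g, hg, rfl⟩ x ⟨hx1, hx2⟩
    refine ⟨_, ⟨_, Reg_mul hf hg, rfl⟩, mul_ne_zero hx1 hx2, ?_⟩
    intro z hz
    exact ⟨left_ne_zero_of_mul hz, right_ne_zero_of_mul hz⟩
  · rw [Set.eq_univ_iff_forall]
    intro z
    refine ⟨_, ⟨_, Reg_const 1, rfl⟩, ?_⟩
    simp
  · change zar k V = _
    rw [zar]
    congr 1
    ext U
    constructor
    · rintro ⟨F, rfl⟩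
      exact ⟨evalHom k V F, ⟨F, rfl⟩, rfl⟩
    · rintro ⟨_, ⟨F, rfl⟩, rfl⟩
      exact ⟨F, rfl⟩

lemma mem_closure_zar {S : Set V} {z : V} :
    z ∈ @closure V (zar k V) S ↔ ∀ f ∈ Reg k V, (∀ s ∈ S, f s = 0) → f z = 0 := by
  letI := zar k V
  rw [isTopologicalBasis_zar.mem_closure_iff]
  constructor
  · intro h f hf hS
    by_contra hne
    obtain ⟨s, hs1, hs2⟩ := h _ ⟨f, hf, rfl⟩ hne
    exact hs1 (hS s hs2)
  · rintro h _ ⟨f, hf, rfl⟩ hz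
    by_contra hne
    apply hz
    apply h f hf
    intro s hs
    by_contra hfs
    exact hne ⟨s, hfs, hs⟩

lemma PolyMap.continuous {F : W → V} (hF : PolyMap k F) :
    @Continuous W V (zar k W) (zar k V) F := by
  letI := zar k V
  letI := zar k W
  refine isTopologicalBasis_zar.continuous_iff.mpr ?_
  rintro _ ⟨f, hf, rfl⟩
  exact isOpen_ne_zero (hF.reg_comp hf)

lemma isIrreducible_univ_zar : @IsIrreducible V (zar k V) Set.univ := by
  letI := zar k V
  refine ⟨⟨0, trivial⟩, ?_⟩
  rintro u v hu hv ⟨x, -, hx⟩ ⟨y, -, hy⟩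
  obtain ⟨_, ⟨f, hf, rfl⟩, hxf, hfu⟩ := isTopologicalBasis_zar.exists_subset_of_mem_open hx hu
  obtain ⟨_, ⟨g, hg, rfl⟩, hyg, hgv⟩ := isTopologicalBasis_zar.exists_subset_of_mem_open hy hv
  by_contra hcon
  rcases Reg_mul_eq_zero hf hg (by
    intro z
    by_contra hne
    exact hcon ⟨z, trivial, hfu (left_ne_zero_of_mul hne), hgv (right_ne_zero_of_mul hne)⟩) with h | h
  · exact hxf (by rw [h]; rfl)
  · exact hyg (by rw [h]; rfl)

lemma PolyMap.isIrreducible_range {F : W → V} (hF : PolyMap k F) :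
    @IsIrreducible V (zar k V) (Set.range F) := by
  letI := zar k V
  letI := zar k W
  rw [← Set.image_univ]
  exact isIrreducible_univ_zar.image F hF.continuous.continuousOn

/-- If `f ≠ 0` and `g` vanishes wherever `f` does not, then `g = 0`. -/
lemma Reg_eq_zero_of_generic {f g : V → k} (hf : f ∈ Reg k V) (hg : g ∈ Reg k V) {z₀ : V}
    (hz : f z₀ ≠ 0) (h : ∀ z, f z ≠ 0 → g z = 0) (z : V) : g z = 0 := by
  rcases Reg_mul_eq_zero hf hg (by
    intro z
    by_cases hfz : f z = 0
    · simp [hfz]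
    · simp [h z hfz]) with h | h
  · exact absurd (by rw [h]; rfl) hz
  · rw [h]; rfl

/-! ### Semicontinuity of the rank -/

lemma PolyMap.det {n : Type*} [Fintype n] [DecidableEq n] {A : W → Matrix n n k}
    (hA : ∀ i j, (fun w => A w i j) ∈ Reg k W) : (fun w => (A w).det) ∈ Reg k W := by
  simp only [Matrix.det_apply']
  exact Reg_sum _ fun σ _ => Reg_mul (Reg_const _) (Reg_prod _ fun i _ => hA _ _)

lemma det_reg {A : W → Module.End k V} (hA : PolyMap k A) :
    (fun w => LinearMap.det (A w)) ∈ Reg k W := by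
  classical
  let b := Module.Free.chooseBasis k V
  have : (fun w => LinearMap.det (A w)) = fun w => (LinearMap.toMatrix b b (A w)).det := by
    funext w; rw [LinearMap.det_toMatrix]
  rw [this]
  apply PolyMap.det
  intro i j
  simp only [LinearMap.toMatrix_apply]
  exact (hA.clm_apply (PolyMap.const (b j))) (b.coord i)

/-- Semicontinuity. -/
lemma exists_reg_finrank_ker_le {A : W → (V →ₗ[k] U)} (hA : PolyMap k A) (w₀ : W) :
    ∃ f ∈ Reg k W, f w₀ ≠ 0 ∧ ∀ w, f w ≠ 0 →
      Module.finrank k (LinearMap.ker (A w)) ≤ Module.finrank k (LinearMap.ker (A w₀)) := by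
  obtain ⟨S, hS⟩ := (LinearMap.ker (A w₀)).exists_isCompl
  have hinj : LinearMap.ker ((A w₀) ∘ₗ S.subtype) = ⊥ := by
    rw [LinearMap.ker_comp]
    rw [Submodule.eq_bot_iff]
    rintro ⟨x, hx⟩ hx'
    have h1 : x ∈ LinearMap.ker (A w₀) ⊓ S := ⟨hx', hx⟩
    rw [hS.inf_eq_bot] at h1
    ext; simpa using h1
  obtain ⟨π, hπ⟩ := ((A w₀) ∘ₗ S.subtype).exists_leftInverse_of_injective hinj
  refine ⟨fun w => LinearMap.det (π ∘ₗ (A w) ∘ₗ S.subtype), ?_, ?_, ?_⟩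
  · apply det_reg
    exact (PolyMap.const π).comp_lin (hA.comp_lin (PolyMap.const _))
  · change LinearMap.det (π ∘ₗ (A w₀) ∘ₗ S.subtype) ≠ 0
    rw [hπ]; simp
  · intro w hw
    have hi : LinearMap.ker (π ∘ₗ (A w) ∘ₗ S.subtype) = ⊥ := by
      by_contra hne
      exact hw (LinearMap.det_eq_zero_iff_ker_ne_bot.mpr hne)
    have hdis : Disjoint (LinearMap.ker (A w)) S := by
      rw [Submodule.disjoint_def]
      intro x hx hxS
      have : (⟨x, hxS⟩ : S) ∈ LinearMap.ker (π ∘ₗ (A w) ∘ₗ S.subtype) := by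
        simp [LinearMap.mem_ker.mp hx]
      rw [hi] at this
      simpa using this
    have h1 := Submodule.finrank_add_finrank_le_of_disjoint hdis
    have h2 := Submodule.finrank_add_eq_of_isCompl hS
    omega

lemma isOpen_finrank_ker_le {A : W → (V →ₗ[k] U)} (hA : PolyMap k A) (n : ℕ) :
    IsOpen[zar k W] {w | Module.finrank k (LinearMap.ker (A w)) ≤ n} := by
  letI := zar k W
  rw [isOpen_iff_forall_mem_open]
  intro w₀ hw₀
  obtain ⟨f, hf, hf0, hfw⟩ := exists_reg_finrank_ker_le hA w₀
  exact ⟨_, fun w hw => (hfw w hw).trans hw₀, isOpen_ne_zero hf, hf0⟩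

end CV
end P1

section P2
open scoped Topology
set_option linter.unusedSectionVars false
set_option linter.style.haveILetI false
variable {k : Type*} [Field k] [IsAlgClosed k] [CharZero k]

namespace CV

variable {V : Type*} [AddCommGroup V] [Module k V] [FiniteDimensional k V]
variable {W : Type*} [AddCommGroup W] [Module k W] [FiniteDimensional k W]
variable {U : Type*} [AddCommGroup U] [Module k U] [FiniteDimensional k U]

/-- First order expansion of a polynomial curve. -/
def HasExp (γ : k → V) (p v : V) : Prop :=
  ∃ ρ : k → V, PolyMap k ρ ∧ ∀ s, γ s = p + s • v + s ^ 2 • ρ s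

lemma HasExp.zero_eq {γ : k → V} {p v : V} (h : HasExp γ p v) : γ 0 = p := by
  obtain ⟨ρ, -, h⟩ := h
  simp [h]

lemma HasExp.congr {γ γ' : k → V} {p v p' v' : V} (h : HasExp γ p v) (h1 : ∀ s, γ' s = γ s)
    (h2 : p' = p) (h3 : v' = v) : HasExp γ' p' v' := by
  have : γ' = γ := funext h1
  subst this h2 h3
  exact h

lemma HasExp.unique {γ : k → V} {p v p' v' : V} (h : HasExp γ p v) (h' : HasExp γ p' v') :
    p = p' ∧ v = v' := by
  have hp : p = p' := h.zero_eq.symm.trans h'.zero_eq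
  refine ⟨hp, ?_⟩
  subst hp
  obtain ⟨ρ, hρ, h⟩ := h
  obtain ⟨ρ', hρ', h'⟩ := h'
  rw [← sub_eq_zero, ← Module.forall_dual_apply_eq_zero_iff k]
  intro φ
  have key := Reg_mul_eq_zero (k := k) (V := k) (f := fun s => s)
    (g := fun s => φ (v - v') + s * (φ (ρ s) + (-1) * φ (ρ' s)))
    (polyMap_reg.mp PolyMap.id)
    (Reg_add (Reg_const _) (Reg_mul (polyMap_reg.mp PolyMap.id)
      (Reg_add (hρ φ) (Reg_mul (Reg_const _) (hρ' φ)))))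
    (by
      intro s
      have h1 := congrArg φ ((h s).symm.trans (h' s))
      simp only [map_add, map_smul, smul_eq_mul, map_sub] at h1 ⊢
      linear_combination h1)
  rcases key with h0 | h0
  · exact absurd (congrFun h0 1) one_ne_zero
  · simpa using congrFun h0 0

lemma HasExp.const (p : V) : HasExp (fun _ : k => p) p 0 :=
  ⟨fun _ => 0, PolyMap.const 0, by simp⟩

lemma HasExp.line (p v : V) : HasExp (fun s : k => p + s • v) p v :=
  ⟨fun _ => 0, PolyMap.const 0, by simp⟩

lemma HasExp.add {γ γ' : k → V} {p v p' v' : V} (h : HasExp γ p v) (h' : HasExp γ' p' v') :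
    HasExp (fun s => γ s + γ' s) (p + p') (v + v') := by
  obtain ⟨ρ, hρ, h⟩ := h
  obtain ⟨ρ', hρ', h'⟩ := h'
  refine ⟨fun s => ρ s + ρ' s, hρ.add hρ', fun s => ?_⟩
  simp only [h, h']
  module

lemma HasExp.sum {ι : Type*} (S : Finset ι) {γ : ι → k → V} {p v : ι → V}
    (h : ∀ i, HasExp (γ i) (p i) (v i)) :
    HasExp (fun s => ∑ i ∈ S, γ i s) (∑ i ∈ S, p i) (∑ i ∈ S, v i) := by
  classical
  induction S using Finset.induction_on with
  | empty => simpa using HasExp.const (k := k) (0 : V)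
  | insert a S ha ih => simp only [Finset.sum_insert ha]; exact (h a).add ih

lemma HasExp.linear (A : V →ₗ[k] U) {γ : k → V} {p v : V} (h : HasExp γ p v) :
    HasExp (fun s => A (γ s)) (A p) (A v) := by
  obtain ⟨ρ, hρ, h⟩ := h
  refine ⟨fun s => A (ρ s), (PolyMap.linear A).comp hρ, fun s => ?_⟩
  simp [h]

lemma HasExp.bilin (B : V →ₗ[k] W →ₗ[k] U) {γ : k → V} {p v : V} {γ' : k → W} {p' v' : W}
    (h : HasExp γ p v) (h' : HasExp γ' p' v') :
    HasExp (fun s => B (γ s) (γ' s)) (B p p') (B v p' + B p v') := by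
  obtain ⟨ρ, hρ, h⟩ := h
  obtain ⟨ρ', hρ', h'⟩ := h'
  have hs : PolyMap k (fun s : k => s) := PolyMap.id
  refine ⟨fun s => (B p (ρ' s) + B v v' + B (ρ s) p') + (s • (B v (ρ' s) + B (ρ s) v') +
    s • s • B (ρ s) (ρ' s)), ?_, fun s => ?_⟩
  · exact (((PolyMap.bilin B (PolyMap.const p) hρ').add (PolyMap.const _)).add
      (PolyMap.bilin B hρ (PolyMap.const p'))).add
      ((hs.smul ((PolyMap.bilin B (PolyMap.const v) hρ').add
        (PolyMap.bilin B hρ (PolyMap.const v')))).add (hs.smul (hs.smul (PolyMap.bilin B hρ hρ'))))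
  · simp only [h, h', map_add, map_smul, LinearMap.add_apply, LinearMap.smul_apply]
    module

lemma HasExp.mul {γ γ' : k → k} {p v p' v' : k} (h : HasExp γ p v) (h' : HasExp γ' p' v') :
    HasExp (fun s => γ s * γ' s) (p * p') (v * p' + p * v') :=
  HasExp.bilin (LinearMap.mul k k) h h'

lemma HasExp.smul {γ : k → k} {γ' : k → V} {p v : k} {p' v' : V} (h : HasExp γ p v)
    (h' : HasExp γ' p' v') :
    HasExp (fun s => γ s • γ' s) (p • p') (v • p' + p • v') :=
  HasExp.bilin (LinearMap.lsmul k V) h h'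

lemma HasExp.apply {γ : k → (V →ₗ[k] U)} {p v : V →ₗ[k] U} {γ' : k → V} {p' v' : V}
    (h : HasExp γ p v) (h' : HasExp γ' p' v') :
    HasExp (fun s => γ s (γ' s)) (p p') (v p' + p v') :=
  HasExp.bilin (LinearMap.id : (V →ₗ[k] U) →ₗ[k] (V →ₗ[k] U)) h h'

lemma HasExp.mul_end {γ γ' : k → Module.End k V} {p v p' v' : Module.End k V}
    (h : HasExp γ p v) (h' : HasExp γ' p' v') :
    HasExp (fun s => γ s * γ' s) (p * p') (v * p' + p * v') :=
  HasExp.bilin (LinearMap.llcomp k V V V) h h'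

lemma HasExp.prodMk {γ : k → V} {p v : V} {γ' : k → W} {p' v' : W} (h : HasExp γ p v)
    (h' : HasExp γ' p' v') :
    HasExp (fun s => (γ s, γ' s)) (p, p') (v, v') := by
  obtain ⟨ρ, hρ, h⟩ := h
  obtain ⟨ρ', hρ', h'⟩ := h'
  refine ⟨fun s => (ρ s, ρ' s), hρ.prodMk hρ', fun s => ?_⟩
  simp [h, h']

/-! ### Differentials of polynomials -/


lemma evalP_add (F G : (MvPolynomial (Module.Free.ChooseBasisIndex k V) k)) (z : V) : evalP k V (F + G) z = evalP k V F z + evalP k V G z :=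
  map_add _ _ _
lemma evalP_mul (F G : (MvPolynomial (Module.Free.ChooseBasisIndex k V) k)) (z : V) : evalP k V (F * G) z = evalP k V F z * evalP k V G z :=
  map_mul _ _ _
lemma evalP_C (c : k) (z : V) : evalP k V (MvPolynomial.C c) z = c := by
  simp [evalP]
lemma evalP_X (i) (z : V) : evalP k V (MvPolynomial.X i) z = coordFn k V z i := by
  simp [evalP]
lemma evalP_mem (F : (MvPolynomial (Module.Free.ChooseBasisIndex k V) k)) : (fun z => evalP k V F z) ∈ Reg k V := ⟨F, rfl⟩

lemma diffAt_apply (F : (MvPolynomial (Module.Free.ChooseBasisIndex k V) k)) (z v : V) :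
    diffAt k V F z v = ∑ i, coordFn k V v i * evalP k V (MvPolynomial.pderiv i F) z := by
  simp [diffAt, Module.Basis.constr_apply_fintype, coordFn]

lemma diffAt_reg (F : (MvPolynomial (Module.Free.ChooseBasisIndex k V) k)) (v : V) : (fun z => diffAt k V F z v) ∈ Reg k V := by
  simp only [diffAt_apply]
  exact Reg_sum _ fun i _ => Reg_mul (Reg_const _) (evalP_mem _)

lemma diffAt_basis (F : (MvPolynomial (Module.Free.ChooseBasisIndex k V) k)) (z : V) (i) : diffAt k V F z (Module.Free.chooseBasis k V i) =
    evalP k V (MvPolynomial.pderiv i F) z := by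
  simp [diffAt, Module.Basis.constr_basis]

lemma HasExp.evalP (F : (MvPolynomial (Module.Free.ChooseBasisIndex k V) k)) {γ : k → V} {p v : V} (h : HasExp γ p v) :
    HasExp (fun s => evalP k V F (γ s)) (evalP k V F p) (diffAt k V F p v) := by
  induction F using MvPolynomial.induction_on with
  | C a =>
    refine (HasExp.const a).congr (fun s => evalP_C _ _) (evalP_C _ _) ?_
    simp [diffAt_apply, CV.evalP]
  | add F G hF hG =>
    refine (hF.add hG).congr (fun s => evalP_add _ _ _) (evalP_add _ _ _) ?_
    simp [diffAt_apply, evalP_add, mul_add, Finset.sum_add_distrib]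
  | mul_X F i hF =>
    have h1 : HasExp (fun s => coordFn k V (γ s) i) (coordFn k V p i) (coordFn k V v i) :=
      h.linear ((Module.Free.chooseBasis k V).coord i)
    refine (hF.mul h1).congr (fun s => ?_) ?_ ?_
    · rw [evalP_mul, evalP_X]
    · rw [evalP_mul, evalP_X]
    · classical
      simp only [diffAt_apply, Derivation.leibniz, evalP_add, smul_eq_mul, evalP_mul, evalP_X,
        mul_add, Finset.sum_add_distrib, MvPolynomial.pderiv_X]
      rw [add_comm, Finset.sum_mul]
      congr 1
      · refine Finset.sum_congr rfl fun j _ => by ring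
      · rw [Finset.sum_eq_single i]
        · rw [Pi.single_eq_same, show (1 : (MvPolynomial (Module.Free.ChooseBasisIndex k V) k)) = MvPolynomial.C 1 from by simp, evalP_C]; ring
        · intro j _ hj
          rw [Pi.single_eq_of_ne (Ne.symm hj),
            show (0 : (MvPolynomial (Module.Free.ChooseBasisIndex k V) k)) = MvPolynomial.C 0 from by simp, evalP_C]; ring
        · simp

/-- Every polynomial map has a differential. -/
lemma PolyMap.exists_diff {F : W → V} (hF : PolyMap k F) :
    ∃ DF : W → (W →ₗ[k] V), PolyMap k DF ∧ ∀ γ : k → W, ∀ w w' : W, HasExp γ w w' →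
      HasExp (fun s => F (γ s)) (F w) (DF w w') := by
  have h := fun i => hF.reg_comp (Reg_coord (k := k) (V := V) i)
  choose G hG using h
  have hG' : ∀ w i, coordFn k V (F w) i = CV.evalP k W (G i) w := fun w i =>
    (congrFun (hG i) w).symm
  let b := Module.Free.chooseBasis k V
  refine ⟨fun w => ∑ i, (diffAt k W (G i) w).smulRight (b i), ?_, ?_⟩
  · apply PolyMap.of_apply
    intro v
    simp only [LinearMap.sum_apply, LinearMap.smulRight_apply]
    exact PolyMap.sum _ fun i _ => (polyMap_reg.mpr (diffAt_reg _ _)).smul (PolyMap.const _)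
  · intro γ w w' h
    have := HasExp.sum Finset.univ (fun i => (h.evalP (G i)).smul (HasExp.const (b i)))
    refine this.congr (fun s => ?_) ?_ ?_
    · rw [PolyMap.eq_sum (k := k) (F := F) (γ s)]; simp only [hG']; rfl
    · rw [PolyMap.eq_sum (k := k) (F := F) w]; simp only [hG']; rfl
    · simp [LinearMap.sum_apply]

end CV
end P2

section P3
open scoped Topology
set_option linter.unusedSectionVars false
set_option linter.style.haveILetI false
variable {k : Type*} [Field k] [IsAlgClosed k] [CharZero k]

namespace CV

variable {V : Type*} [AddCommGroup V] [Module k V] [FiniteDimensional k V]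
variable {W : Type*} [AddCommGroup W] [Module k W] [FiniteDimensional k W]
variable {U : Type*} [AddCommGroup U] [Module k U] [FiniteDimensional k U]

lemma reg_poly {f : k → k} (hf : f ∈ Reg k k) : ∃ P : Polynomial k, ∀ s, f s = P.eval s := by
  refine Reg_induction (P := fun f => ∃ P : Polynomial k, ∀ s, f s = P.eval s) ?_ ?_ ?_ ?_ hf
  · intro c; exact ⟨Polynomial.C c, by simp⟩
  · intro φ
    refine ⟨Polynomial.X * Polynomial.C (φ 1), fun s => ?_⟩
    simp only [Polynomial.eval_mul, Polynomial.eval_X, Polynomial.eval_C]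
    rw [← smul_eq_mul, ← map_smul, smul_eq_mul, mul_one]
  · rintro f g - - ⟨P, hP⟩ ⟨Q, hQ⟩; exact ⟨P + Q, by simp [hP, hQ]⟩
  · rintro f g - - ⟨P, hP⟩ ⟨Q, hQ⟩; exact ⟨P * Q, by simp [hP, hQ]⟩

lemma hasExp_poly (P : Polynomial k) (s : k) :
    HasExp (fun s' => P.eval (s + s')) (P.eval s) (P.derivative.eval s) := by
  induction P using Polynomial.induction_on' with
  | add p q hp hq => exact (hp.add hq).congr (by simp) (by simp) (by simp)
  | monomial n a =>
    induction n with
    | zero => exact (HasExp.const a).congr (by simp) (by simp) (by simp)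
    | succ n ih =>
      have h1 : HasExp (fun s' : k => s + s' • (1 : k)) s 1 := HasExp.line s 1
      refine (ih.mul h1).congr ?_ ?_ ?_
      · intro s'; simp [pow_succ, mul_assoc]
      · simp [pow_succ, mul_assoc]
      · rcases n with _ | n
        · simp
        · simp [Polynomial.derivative_monomial, pow_succ]; ring

lemma seq_zero (h : ℕ → k → k) (hreg : ∀ j, h j ∈ Reg k k)
    (hexp : ∀ j s, HasExp (fun s' => h j (s + s')) (h j s) (h (j + 1) s))
    (h0 : ∀ j, h j 0 = 0) (s : k) : h 0 s = 0 := by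
  choose P hP using fun j => reg_poly (hreg j)
  have hder : ∀ j, (P j).derivative = P (j + 1) := by
    intro j
    apply Polynomial.funext
    intro s
    have := hexp j s
    simp only [hP] at this
    exact ((hasExp_poly (P j) s).unique this).2
  have key : ∀ d j, (P j).natDegree < d → P j = 0 := by
    intro d
    induction d with
    | zero => intro j hj; omega
    | succ d ih =>
      intro j hj
      by_cases hd : (P j).natDegree = 0
      · rw [Polynomial.natDegree_eq_zero] at hd
        obtain ⟨c, hc⟩ := hd
        have := h0 j
        rw [hP, ← hc, Polynomial.eval_C] at this
        rw [← hc, this, map_zero]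
      · have h1 := Polynomial.natDegree_derivative_lt hd
        rw [hder] at h1
        have h2 := ih (j + 1) (by omega)
        rw [← hder] at h2
        exact absurd (Polynomial.natDegree_eq_zero_of_derivative_eq_zero h2) hd
  rw [hP, key _ 0 (Nat.lt_succ_self _), Polynomial.eval_zero]

lemma exists_vf (A : V → V) (hA : PolyMap k A)
    (f : MvPolynomial (Module.Free.ChooseBasisIndex k V) k) :
    ∃ f' : MvPolynomial (Module.Free.ChooseBasisIndex k V) k,
      ∀ z, evalP k V f' z = diffAt k V f z (A z) := by
  have : (fun z => diffAt k V f z (A z)) ∈ Reg k V := by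
    simp only [diffAt_apply]
    exact Reg_sum _ fun i _ => Reg_mul (hA.reg_comp (Reg_coord i)) (evalP_mem _)
  obtain ⟨f', hf'⟩ := this
  exact ⟨f', fun z => congrFun hf' z⟩

/-- A set of polynomials stable under a vector field and vanishing at a point vanishes along
polynomial integral curves. -/
lemma flow_zero (A : V → V) (Γ : k → V) (hΓ : PolyMap k Γ)
    (hexp : ∀ s, HasExp (fun s' => Γ (s + s')) (Γ s) (A (Γ s)))
    (I : Set (MvPolynomial (Module.Free.ChooseBasisIndex k V) k))
    (hI : ∀ f ∈ I, ∃ f' ∈ I, ∀ z, evalP k V f' z = diffAt k V f z (A z))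
    (h0 : ∀ f ∈ I, evalP k V f (Γ 0) = 0) {f} (hf : f ∈ I) (s : k) : evalP k V f (Γ s) = 0 := by
  choose! D hD1 hD2 using hI
  have hmem : ∀ j, D^[j] f ∈ I := by
    intro j
    induction j with
    | zero => exact hf
    | succ j ih => rw [Function.iterate_succ_apply']; exact hD1 _ ih
  refine seq_zero (fun j s => evalP k V (D^[j] f) (Γ s)) ?_ ?_ ?_ s
  · intro j; exact hΓ.reg_comp (evalP_mem _)
  · intro j s
    refine ((hexp s).evalP (D^[j] f)).congr (fun _ => rfl) rfl ?_
    rw [Function.iterate_succ_apply']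
    exact hD2 _ (hmem j) _
  · intro j; exact h0 _ (hmem j)

lemma eq_zero_of_evalP {f : MvPolynomial (Module.Free.ChooseBasisIndex k V) k}
    (h : ∀ z, evalP k V f z = 0) : f = 0 := by
  apply evalHom_injective (k := k) (V := V)
  rw [map_zero]; funext z; exact h z

lemma surj_generic {A : W → (V →ₗ[k] U)} (hA : PolyMap k A) (w₀ : W)
    (h : Function.Surjective (A w₀)) :
    ∃ f ∈ Reg k W, f w₀ ≠ 0 ∧ ∀ w, f w ≠ 0 → Function.Surjective (A w) := by
  obtain ⟨f, hf, hf0, hfw⟩ := exists_reg_finrank_ker_le hA w₀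
  refine ⟨f, hf, hf0, fun w hw => ?_⟩
  have h1 := hfw w hw
  have h2 := LinearMap.finrank_range_add_finrank_ker (A w)
  have h3 := LinearMap.finrank_range_add_finrank_ker (A w₀)
  rw [LinearMap.range_eq_top.mpr h, finrank_top] at h3
  rw [← LinearMap.range_eq_top]
  apply Submodule.eq_top_of_finrank_eq
  have := Submodule.finrank_le (LinearMap.range (A w))
  omega

lemma inj_generic {A : W → (V →ₗ[k] U)} (hA : PolyMap k A) (w₀ : W)
    (h : Function.Injective (A w₀)) :
    ∃ f ∈ Reg k W, f w₀ ≠ 0 ∧ ∀ w, f w ≠ 0 → Function.Injective (A w) := by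
  obtain ⟨f, hf, hf0, hfw⟩ := exists_reg_finrank_ker_le hA w₀
  refine ⟨f, hf, hf0, fun w hw => ?_⟩
  have h1 := hfw w hw
  rw [LinearMap.ker_eq_bot.mpr h, finrank_bot] at h1
  rw [← LinearMap.ker_eq_bot]
  exact Submodule.finrank_eq_zero.mp (by omega)

/-- A polynomial map with a surjective differential at one point is dominant. -/
lemma dominant {F : W → V} (hF : PolyMap k F) {DF : W → (W →ₗ[k] V)} (hDF : PolyMap k DF)
    (hexp : ∀ w w' : W, HasExp (fun s : k => F (w + s • w')) (F w) (DF w w'))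
    {w₀ : W} (hs : Function.Surjective (DF w₀))
    {f : MvPolynomial (Module.Free.ChooseBasisIndex k V) k} (hf : ∀ w, evalP k V f (F w) = 0) :
    f = 0 := by
  apply eq_zero_of_evalP
  intro z
  obtain ⟨q, hq, hq0, hqs⟩ := surj_generic hDF w₀ hs
  have hl : PolyMap k (fun s : k => F w₀ + s • (z - F w₀)) :=
    (PolyMap.const _).add (PolyMap.id.smul (PolyMap.const _))
  have := flow_zero (V := V) (fun _ => z - F w₀) (fun s : k => F w₀ + s • (z - F w₀)) hl
    (fun s => (HasExp.line (F w₀ + s • (z - F w₀)) (z - F w₀)).congr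
      (fun s' => by module) rfl rfl)
    {f | ∀ w, evalP k V f (F w) = 0} ?_ ?_ hf 1
  · simpa using this
  · intro f hf
    obtain ⟨f', hf'⟩ := exists_vf (fun _ => z - F w₀) (PolyMap.const _) f
    refine ⟨f', ?_, hf'⟩
    intro w
    refine Reg_eq_zero_of_generic hq (hF.reg_comp (evalP_mem f')) hq0 (fun w hw => ?_) w
    obtain ⟨w', hw'⟩ := hqs w hw (z - F w₀)
    have h1 := (hexp w w').evalP f
    have h2 : (fun s => evalP k V f (F (w + s • w'))) = fun _ : k => 0 := by
      funext s; exact hf _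
    rw [h2] at h1
    have h3 := (h1.unique (HasExp.const 0)).2
    rw [hf', ← hw', h3]
  · intro f hf
    simpa using hf w₀

end CV
end P3

section P4
open scoped Topology
set_option linter.unusedSectionVars false
set_option linter.style.haveILetI false

lemma ringKrullDim_eq_of_integral {R A : Type*} [CommRing R] [IsDomain R] [CommRing A] [IsDomain A]
    [Algebra R A]
    [Algebra.IsIntegral R A] [FaithfulSMul R A] : ringKrullDim A = ringKrullDim R := by
  apply le_antisymm
  · apply Order.krullDim_le_of_strictMono (PrimeSpectrum.comap (algebraMap R A))
    intro P Q h
    exact Ideal.IsIntegral.comap_lt_comap (R := R) (I := P.asIdeal) (J := Q.asIdeal) h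
  · apply iSup_le
    intro l
    obtain ⟨Q, -, hQ1, hQ2⟩ := Ideal.exists_ideal_over_prime_of_isIntegral (S := A)
      l.head.asIdeal (⊥ : Ideal A) (by
        rw [Ideal.comap_bot_of_injective _ (FaithfulSMul.algebraMap_injective R A)]; exact bot_le)
    haveI : Q.LiesOver l.head.asIdeal := ⟨hQ2.symm⟩
    obtain ⟨L, hL, -⟩ := Ideal.exists_ltSeries_of_hasGoingUp l Q
    rw [← hL]
    exact Order.LTSeries.length_le_krullDim L

lemma ringKrullDim_of_inj {k A : Type*} [Field k] [CommRing A] [IsDomain A] [Algebra k A]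
    [Algebra.FiniteType k A] {σ τ : Type*} [Fintype σ] [Fintype τ]
    (f : MvPolynomial σ k →ₐ[k] A) (hf : Function.Injective f)
    (g : A →ₐ[k] MvPolynomial τ k) (hg : Function.Injective g)
    (hc : Fintype.card σ = Fintype.card τ) :
    ringKrullDim A = (Fintype.card σ : ℕ) := by
  obtain ⟨s, φ, hφ, hInt⟩ := exists_integral_inj_algHom_of_fg k A
  letI : Algebra (MvPolynomial (Fin s) k) A := φ.toRingHom.toAlgebra
  haveI : IsScalarTower k (MvPolynomial (Fin s) k) A :=
    IsScalarTower.of_algebraMap_eq fun x => (φ.commutes x).symm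
  haveI : FaithfulSMul (MvPolynomial (Fin s) k) A :=
    (faithfulSMul_iff_algebraMap_injective _ _).mpr hφ
  haveI : Algebra.IsIntegral (MvPolynomial (Fin s) k) A := ⟨hInt⟩
  rw [ringKrullDim_eq_of_integral (R := MvPolynomial (Fin s) k) (A := A),
    MvPolynomial.ringKrullDim_of_isNoetherianRing, ringKrullDim_eq_zero_of_field]
  have h1 := lift_trdeg_le_of_injective f hf
  have h2 := lift_trdeg_le_of_injective g hg
  have h3 := lift_trdeg_add_eq k (MvPolynomial (Fin s) k) A
  rw [trdeg_eq_zero (R := MvPolynomial (Fin s) k) (A := A)] at h3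
  rw [MvPolynomial.trdeg_of_isDomain] at h1 h2 h3
  simp only [Cardinal.mk_fintype, Cardinal.lift_natCast, Cardinal.lift_uzero, add_zero,
    Fintype.card_fin, Cardinal.lift_id, Cardinal.lift_zero] at h1 h2 h3
  have h4 : ((s : ℕ) : Cardinal) = Cardinal.lift (Algebra.trdeg k A) := h3
  have e1 : Fintype.card σ ≤ s := by
    rw [← Nat.cast_le (α := Cardinal)]
    simp at h1 h4
    rw [h4]; exact h1
  have e2 : s ≤ Fintype.card τ := by
    rw [← Nat.cast_le (α := Cardinal)]
    simp at h2 h4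
    rw [h4]; exact h2
  have : s = Fintype.card σ := by omega
  simp [this]

namespace CV
variable {k : Type*} [Field k] [IsAlgClosed k] [CharZero k]
variable {V : Type*} [AddCommGroup V] [Module k V] [FiniteDimensional k V]
variable {W : Type*} [AddCommGroup W] [Module k W] [FiniteDimensional k W]

variable (k) in
/-- The vanishing ideal. -/
def vanI (S : Set V) : Ideal (MvPolynomial (Module.Free.ChooseBasisIndex k V) k) where
  carrier := {f | ∀ z ∈ S, evalP k V f z = 0}
  add_mem' := fun {a b} ha hb z hz => by rw [evalP_add, ha z hz, hb z hz, add_zero]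
  zero_mem' := fun z _ => map_zero _
  smul_mem' := fun c x hx z hz => by rw [smul_eq_mul, evalP_mul, hx z hz, mul_zero]

lemma mem_vanI {S : Set V} {f : MvPolynomial (Module.Free.ChooseBasisIndex k V) k} :
    f ∈ vanI k S ↔ ∀ z ∈ S, evalP k V f z = 0 := Iff.rfl

/-- The zero locus. -/
def zl (P : Ideal (MvPolynomial (Module.Free.ChooseBasisIndex k V) k)) : Set V :=
  {z | ∀ f ∈ P, evalP k V f z = 0}

lemma vanI_anti {S T : Set V} (h : S ⊆ T) : vanI k T ≤ vanI k S := fun _ hf z hz => hf z (h hz)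

lemma zl_vanI (S : Set V) : zl (vanI k S) = @closure V (zar k V) S := by
  ext z
  rw [mem_closure_zar]
  constructor
  · rintro h _ ⟨f, rfl⟩ hS
    exact h f hS
  · intro h f hf
    exact h _ ⟨f, rfl⟩ hf

lemma isClosed_zl (P : Ideal (MvPolynomial (Module.Free.ChooseBasisIndex k V) k)) :
    IsClosed[zar k V] (zl P) := by
  letI := zar k V
  have : zl P = ⋂ f ∈ P, {z | evalP k V f z = 0} := by ext z; simp [zl]
  rw [this]
  exact isClosed_biInter fun f _ => isClosed_eq_zero (evalP_mem f)

lemma vanI_zl (P : Ideal (MvPolynomial (Module.Free.ChooseBasisIndex k V) k)) [P.IsPrime] :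
    vanI k (zl P) = P := by
  have h := MvPolynomial.IsPrime.vanishingIdeal_zeroLocus (K := k) P
  conv_rhs => rw [← h]
  ext f
  rw [mem_vanI, MvPolynomial.mem_vanishingIdeal_iff]
  constructor
  · intro hf c hc
    have := hf ((Module.Free.chooseBasis k V).equivFun.symm c) (fun q hq => by
      simp only [evalP, coordFn_equivFun_symm]
      exact hc q hq)
    simpa only [evalP, coordFn_equivFun_symm] using this
  · intro hf z hz
    exact hf (coordFn k V z) (fun q hq => hz q hq)

lemma vanI_isPrime {S : Set V} (hS : @IsIrreducible V (zar k V) S) : (vanI k S).IsPrime := by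
  letI := zar k V
  refine ⟨?_, ?_⟩
  · rw [Ideal.ne_top_iff_one]
    intro h
    obtain ⟨z, hz⟩ := hS.1
    have := h z hz
    simp [evalP] at this
  · intro f q hfq
    by_contra hcon
    push Not at hcon
    obtain ⟨h1, h2⟩ := hcon
    rw [mem_vanI] at h1 h2
    push Not at h1 h2
    obtain ⟨x, hx, hfx⟩ := h1
    obtain ⟨y, hy, hqy⟩ := h2
    obtain ⟨z, hz, hz1, hz2⟩ := hS.2 _ _ (isOpen_ne_zero (evalP_mem f))
      (isOpen_ne_zero (evalP_mem q)) ⟨x, hx, hfx⟩ ⟨y, hy, hqy⟩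
    have := hfq z hz
    rw [evalP_mul] at this
    exact mul_ne_zero hz1 hz2 this

lemma zl_isIrreducible (P : Ideal (MvPolynomial (Module.Free.ChooseBasisIndex k V) k))
    [hP : P.IsPrime] : @IsIrreducible V (zar k V) (zl P) := by
  letI := zar k V
  constructor
  · by_contra h
    rw [Set.not_nonempty_iff_eq_empty] at h
    apply hP.ne_top
    rw [← vanI_zl P, h, Ideal.eq_top_iff_one]
    intro z hz; exact absurd hz (Set.notMem_empty z)
  · rintro u v hu hv ⟨x, hxP, hx⟩ ⟨y, hyP, hy⟩
    obtain ⟨_, ⟨_, ⟨f, rfl⟩, rfl⟩, hxf, hfu⟩ :=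
      isTopologicalBasis_zar.exists_subset_of_mem_open hx hu
    obtain ⟨_, ⟨_, ⟨q, rfl⟩, rfl⟩, hyg, hgv⟩ :=
      isTopologicalBasis_zar.exists_subset_of_mem_open hy hv
    have hf : f ∉ P := fun h => hxf (hxP f h)
    have hq : q ∉ P := fun h => hyg (hyP q h)
    have hfq : f * q ∉ P := fun h => (hP.mem_or_mem h).elim hf hq
    rw [← vanI_zl P, mem_vanI] at hfq
    push Not at hfq
    obtain ⟨z, hz, hne⟩ := hfq
    rw [evalP_mul] at hne
    exact ⟨z, hz, hfu (left_ne_zero_of_mul hne), hgv (right_ne_zero_of_mul hne)⟩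

lemma dimSet_mono {S T : Set V} (h : S ⊆ T) : dimSet k V S ≤ dimSet k V T := by
  letI := zar k V
  exact (Topology.IsEmbedding.inclusion h).isInducing.topologicalKrullDim_le

lemma dimSet_eq {Z : Set V} (hZ : IsClosed[zar k V] Z) :
    dimSet k V Z = ringKrullDim (MvPolynomial (Module.Free.ChooseBasisIndex k V) k ⧸ vanI k Z) := by
  letI := zar k V
  rw [ringKrullDim_quotient]
  apply le_antisymm
  · rw [← Order.krullDim_orderDual]
    change Order.krullDim (TopologicalSpace.IrreducibleCloseds Z) ≤ _
    refine Order.krullDim_le_of_strictMono (fun T => OrderDual.toDual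
      (⟨⟨vanI k (Subtype.val '' (T : Set Z)), vanI_isPrime
        (T.isIrreducible.image _ continuous_subtype_val.continuousOn)⟩,
        vanI_anti (Subtype.coe_image_subset _ _)⟩ : PrimeSpectrum.zeroLocus _)) ?_
    intro T T' hTT
    refine lt_of_le_not_ge (vanI_anti (Set.image_mono hTT.le)) ?_
    intro hle
    apply hTT.not_ge
    intro z hz
    have h1 : vanI k (Subtype.val '' (T : Set Z)) ≤ vanI k (Subtype.val '' (T' : Set Z)) := hle
    have h2 : (z : V) ∈ zl (vanI k (Subtype.val '' (T : Set Z))) :=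
      fun f hf => h1 hf _ ⟨z, hz, rfl⟩
    rw [zl_vanI] at h2
    have h3 : z ∈ closure (T : Set Z) := by
      rw [Topology.IsInducing.subtypeVal.closure_eq_preimage_closure_image]
      exact h2
    rwa [T.isClosed.closure_eq] at h3
  · rw [← Order.krullDim_orderDual]
    change _ ≤ Order.krullDim (TopologicalSpace.IrreducibleCloseds Z)
    have hsub : ∀ P : PrimeSpectrum.zeroLocus
        (vanI k Z : Set (MvPolynomial (Module.Free.ChooseBasisIndex k V) k)),
        zl P.1.asIdeal ⊆ Z := by
      intro P z hz
      rw [← hZ.closure_eq, ← zl_vanI]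
      exact fun f hf => hz f (P.2 hf)
    have hT : ∀ P : PrimeSpectrum.zeroLocus
        (vanI k Z : Set (MvPolynomial (Module.Free.ChooseBasisIndex k V) k)),
        ∃ T : TopologicalSpace.IrreducibleCloseds Z,
          (T : Set Z) = Subtype.val ⁻¹' (zl P.1.asIdeal) := by
      intro P
      have hi := zl_isIrreducible P.1.asIdeal
      refine ⟨⟨Subtype.val ⁻¹' (zl P.1.asIdeal), ?_,
        (isClosed_zl _).preimage continuous_subtype_val⟩, rfl⟩
      constructor
      · obtain ⟨z, hz⟩ := hi.1
        exact ⟨⟨z, hsub P hz⟩, hz⟩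
      · rintro u v ⟨u, hu, rfl⟩ ⟨v, hv, rfl⟩ ⟨x, hxP, hx⟩ ⟨y, hyP, hy⟩
        obtain ⟨z, hz, hzu⟩ := hi.2 u v hu hv ⟨x, hxP, hx⟩ ⟨y, hyP, hy⟩
        exact ⟨⟨z, hsub P hz⟩, hz, hzu⟩
    choose T hT using hT
    refine Order.krullDim_le_of_strictMono
      (β := TopologicalSpace.IrreducibleCloseds Z) (fun P => T (OrderDual.ofDual P)) ?_
    intro P Q hPQ
    obtain ⟨P, rfl⟩ := OrderDual.toDual.surjective P
    obtain ⟨Q, rfl⟩ := OrderDual.toDual.surjective Q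
    have hPQ' : Q.1.asIdeal < P.1.asIdeal := hPQ
    change T P < T Q
    rw [← SetLike.coe_ssubset_coe, hT, hT, Set.ssubset_def]
    constructor
    · intro z hz f hf
      exact hz f (hPQ'.le hf)
    · intro hle
      apply hPQ'.not_ge
      have h4 : zl Q.1.asIdeal ⊆ zl P.1.asIdeal := by
        intro z hz
        have h5 : (⟨z, hsub Q hz⟩ : Z) ∈ (Subtype.val ⁻¹' (zl Q.1.asIdeal) : Set Z) := by
          rw [Set.mem_preimage]; exact hz
        have h7 := hle h5
        rw [Set.mem_preimage] at h7
        exact h7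
      have h6 := vanI_anti (k := k) h4
      rwa [vanI_zl, vanI_zl] at h6

lemma exists_pullback {Φ : W → V} (hΦ : PolyMap k Φ) :
    ∃ Ψ : MvPolynomial (Module.Free.ChooseBasisIndex k V) k →ₐ[k]
      MvPolynomial (Module.Free.ChooseBasisIndex k W) k,
      ∀ f w, evalP k W (Ψ f) w = evalP k V f (Φ w) := by
  choose G hG using fun i => hΦ.reg_comp (Reg_coord (k := k) (V := V) i)
  refine ⟨MvPolynomial.aeval G, fun f w => ?_⟩
  have : (MvPolynomial.aeval (coordFn k W w)).comp (MvPolynomial.aeval G) =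
      (MvPolynomial.aeval (coordFn k V (Φ w)) :
        MvPolynomial (Module.Free.ChooseBasisIndex k V) k →ₐ[k] k) := by
    apply MvPolynomial.algHom_ext
    intro i
    simp only [AlgHom.comp_apply, MvPolynomial.aeval_X]
    exact congrFun (hG i) w
  exact DFunLike.congr_fun this f

lemma vanI_closure (S : Set V) : vanI k (@closure V (zar k V) S) = vanI k S := by
  letI := zar k V
  refine le_antisymm (vanI_anti subset_closure) ?_
  intro f hf z hz
  rw [mem_closure_zar] at hz
  exact hz _ ⟨f, rfl⟩ hf

/-- Dimension of the closure of the image of a map with injective differential. -/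
lemma dim_closure_range {Φ : W → V} (hΦ : PolyMap k Φ) {DΦ : W → (W →ₗ[k] V)}
    (hDΦ : PolyMap k DΦ)
    (hexp : ∀ w w' : W, HasExp (fun s : k => Φ (w + s • w')) (Φ w) (DΦ w w'))
    {w₀ : W} (hinj : Function.Injective (DΦ w₀)) :
    dimSet k V (@closure V (zar k V) (Set.range Φ)) = (Module.finrank k W : ℕ) := by
  letI := zar k V
  rw [dimSet_eq isClosed_closure, vanI_closure]
  haveI : (vanI k (Set.range Φ)).IsPrime := vanI_isPrime hΦ.isIrreducible_range
  obtain ⟨Ψ, hΨ⟩ := exists_pullback hΦ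
  obtain ⟨L, hL⟩ := (DΦ w₀).exists_leftInverse_of_injective (LinearMap.ker_eq_bot.mpr hinj)
  obtain ⟨M, hM⟩ := exists_pullback (PolyMap.linear L)
  have hmem : ∀ f, f ∈ vanI k (Set.range Φ) ↔ Ψ f = 0 := by
    intro f
    constructor
    · intro h
      apply eq_zero_of_evalP
      intro w
      rw [hΨ]; exact h _ ⟨w, rfl⟩
    · rintro h _ ⟨w, rfl⟩
      rw [← hΨ, h]; exact map_zero _
  have key := ringKrullDim_of_inj (k := k)
    (A := MvPolynomial (Module.Free.ChooseBasisIndex k V) k ⧸ vanI k (Set.range Φ))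
    ((Ideal.Quotient.mkₐ k (vanI k (Set.range Φ))).comp M) ?_
    (Ideal.Quotient.liftₐ (vanI k (Set.range Φ)) Ψ (fun f hf => (hmem f).mp hf)) ?_ rfl
  · rw [key, Module.finrank_eq_card_chooseBasisIndex]
  · rw [injective_iff_map_eq_zero]
    intro q hq
    have hq' : M q ∈ vanI k (Set.range Φ) := Ideal.Quotient.eq_zero_iff_mem.mp hq
    refine dominant (F := fun w => L (Φ w)) (DF := fun w => L ∘ₗ DΦ w)
      ((PolyMap.linear L).comp hΦ) ((PolyMap.const L).comp_lin hDΦ)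
      (fun w w' => (hexp w w').linear L) (w₀ := w₀) ?_ ?_
    · rw [hL]; exact fun x => ⟨x, rfl⟩
    · intro w
      rw [← hM]; exact hq' _ ⟨w, rfl⟩
  · rw [injective_iff_map_eq_zero]
    intro a ha
    obtain ⟨f, rfl⟩ := Ideal.Quotient.mk_surjective a
    rw [Ideal.Quotient.eq_zero_iff_mem, hmem]
    exact ha

lemma eq_of_dim_eq {Z₁ Z₂ : Set V} (h1 : IsClosed[zar k V] Z₁) (h2 : IsClosed[zar k V] Z₂)
    (hirr : @IsIrreducible V (zar k V) Z₂) (hsub : Z₁ ⊆ Z₂) {n : ℕ}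
    (hd1 : dimSet k V Z₁ = n) (hd2 : dimSet k V Z₂ = n) : Z₁ = Z₂ := by
  letI := zar k V
  haveI := vanI_isPrime hirr
  have hle : vanI k Z₂ ≤ vanI k Z₁ := vanI_anti hsub
  by_cases h : vanI k Z₁ ≤ vanI k Z₂
  · have := le_antisymm hle h
    rw [← h1.closure_eq, ← h2.closure_eq, ← zl_vanI, ← zl_vanI, this]
  · exfalso
    rw [SetLike.not_le_iff_exists] at h
    obtain ⟨f, hf1, hf2⟩ := h
    have := ringKrullDim_succ_le_of_surjective (Ideal.Quotient.factor hle)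
      (Ideal.Quotient.factor_surjective hle) (r := Ideal.Quotient.mk _ f)
      (mem_nonZeroDivisors_of_ne_zero (by
        rw [Ne, Ideal.Quotient.eq_zero_iff_mem]; exact hf2))
      (by rw [Ideal.Quotient.factor_mk, Ideal.Quotient.eq_zero_iff_mem]; exact hf1)
    rw [← dimSet_eq h1, ← dimSet_eq h2, hd1, hd2] at this
    have h' : ((n + 1 : ℕ) : WithBot ℕ∞) ≤ (n : ℕ) := by exact_mod_cast this
    have h'' : n + 1 ≤ n := by exact_mod_cast h'
    omega

end CV
end P4

section P5
open scoped Topology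
set_option linter.unusedSectionVars false
set_option linter.style.haveILetI false
variable {k : Type*} [Field k] [IsAlgClosed k] [CharZero k]

namespace CV

variable {V : Type*} [AddCommGroup V] [Module k V] [FiniteDimensional k V]
variable {W : Type*} [AddCommGroup W] [Module k W] [FiniteDimensional k W]

lemma constructible_nhds_bot {R : Type*} [CommRing R] [IsDomain R] {s : Set (PrimeSpectrum R)}
    (hs : Topology.IsConstructible s) : s ∈ 𝓝 (⊥ : PrimeSpectrum R) ∨ sᶜ ∈ 𝓝 (⊥ : PrimeSpectrum R) := by
  induction hs using Topology.IsConstructible.empty_union_induction with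
  | open_retrocompact U hU _ =>
    rcases U.eq_empty_or_nonempty with rfl | ⟨x, hx⟩
    · right; simp
    · left
      refine hU.mem_nhds ?_
      exact (PrimeSpectrum.le_iff_specializes ⊥ x |>.mp bot_le).mem_open hU hx
  | union s hs t ht h1 h2 =>
    rcases h1 with h1 | h1
    · left; exact Filter.mem_of_superset h1 Set.subset_union_left
    · rcases h2 with h2 | h2
      · left; exact Filter.mem_of_superset h2 Set.subset_union_right
      · right; rw [Set.compl_union]; exact Filter.inter_mem h1 h2
  | compl s hs h => rw [compl_compl]; exact h.symm

/-- Chevalley: the image of a dominant polynomial map contains a nonempty open set. -/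
lemma chevalley {F : W → V} (hF : PolyMap k F)
    (hdom : ∀ f : MvPolynomial (Module.Free.ChooseBasisIndex k V) k,
      (∀ w, evalP k V f (F w) = 0) → f = 0) :
    ∃ f : MvPolynomial (Module.Free.ChooseBasisIndex k V) k, f ≠ 0 ∧
      ∀ v, evalP k V f v ≠ 0 → v ∈ Set.range F := by
  obtain ⟨Ψ, hΨ⟩ := exists_pullback hF
  have hinj : Function.Injective Ψ := by
    rw [injective_iff_map_eq_zero]
    intro f hf
    refine hdom f fun w => ?_
    rw [← hΨ, hf]; exact map_zero _
  have hfp : Ψ.toRingHom.FinitePresentation := by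
    rw [← RingHom.FinitePresentation.of_finiteType]
    have : Ψ.FiniteType := by
      apply AlgHom.FiniteType.of_comp_finiteType (f := Algebra.ofId k _)
      have h : (Ψ.comp (Algebra.ofId k _)) = Algebra.ofId k _ := Subsingleton.elim _ _
      rw [h]
      have : Algebra.FiniteType k (MvPolynomial (Module.Free.ChooseBasisIndex k W) k) := inferInstance
      change (algebraMap k (MvPolynomial (Module.Free.ChooseBasisIndex k W) k)).FiniteType
      exact RingHom.finiteType_algebraMap.mpr this
    exact this
  have hc := PrimeSpectrum.isConstructible_range_comap hfp
  have hbot : (⊥ : PrimeSpectrum (MvPolynomial (Module.Free.ChooseBasisIndex k V) k)) ∈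
      Set.range (PrimeSpectrum.comap
        Ψ.toRingHom) := by
    refine ⟨⊥, ?_⟩
    ext f
    simp only [PrimeSpectrum.comap_asIdeal, PrimeSpectrum.asIdeal_bot, Ideal.mem_comap, Ideal.mem_bot]
    exact map_eq_zero_iff _ hinj
  rcases constructible_nhds_bot hc with h | h
  swap
  · exact absurd hbot (mem_of_mem_nhds h)
  obtain ⟨_, ⟨_, ⟨f, rfl⟩, rfl⟩, hf, hsub⟩ :=
    PrimeSpectrum.isBasis_basic_opens.mem_nhds_iff.mp h
  refine ⟨f, fun h0 => hf (by simp [h0]), fun v hv => ?_⟩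
  letI := zar k V
  haveI hp : (vanI k ({v} : Set V)).IsPrime := vanI_isPrime isIrreducible_singleton
  obtain ⟨Q, hQ⟩ := hsub (show (⟨vanI k ({v} : Set V), hp⟩ : PrimeSpectrum _) ∈ _ from by
    change f ∉ vanI k ({v} : Set V)
    intro h; exact hv (h v rfl))
  haveI := Q.isPrime
  obtain ⟨w, hw⟩ := (zl_isIrreducible Q.asIdeal).1
  refine ⟨w, ?_⟩
  have hQ' : ∀ p, p ∈ vanI k ({v} : Set V) → evalP k V p (F w) = 0 := by
    intro p hp
    rw [← hΨ]
    apply hw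
    have := congrArg PrimeSpectrum.asIdeal hQ
    simp only [PrimeSpectrum.comap_asIdeal] at this
    rw [← this] at hp
    exact hp
  apply (Module.Free.chooseBasis k V).repr.injective
  ext i
  have := hQ' (MvPolynomial.X i - MvPolynomial.C (coordFn k V v i)) (by
    rintro _ rfl
    simp [evalP])
  simp only [evalP, map_sub, MvPolynomial.aeval_X, MvPolynomial.aeval_C, Algebra.algebraMap_self_apply, sub_eq_zero] at this
  exact this

end CV
end P5

section P6
open scoped Topology
set_option linter.unusedSectionVars false
set_option linter.style.haveILetI false
variable {k : Type*} [Field k] [IsAlgClosed k] [CharZero k]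

namespace CV

variable {g : Type*} [LieRing g] [LieAlgebra k g] [FiniteDimensional k g]

lemma pow_finrank_zero {f : Module.End k g} (hf : IsNilpotent f) :
    f ^ Module.finrank k g = 0 := by
  have h1 := (LinearMap.charpoly_eq_X_pow_iff f).mpr
    (fun m => by obtain ⟨n, hn⟩ := hf; exact ⟨n, by rw [hn]; rfl⟩)
  have h2 := LinearMap.aeval_self_charpoly f
  rwa [h1, map_pow, Polynomial.aeval_X] at h2

lemma expEnd_eq (m : Module ℚ g) {f : Module.End k g} (hf : IsNilpotent f) :
    expEnd k g f = IsNilpotent.exp f := by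
  have h0 : f ^ (Module.finrank k g + 1) = 0 := by
    rw [pow_succ, pow_finrank_zero hf, zero_mul]
  rw [IsNilpotent.exp_eq_sum h0, expEnd]
  refine Finset.sum_congr rfl fun i _ => ?_
  ext x
  simp only [LinearMap.smul_apply]
  have hi : (i.factorial : k) ≠ 0 := by exact_mod_cast i.factorial_ne_zero
  have hi' : (i.factorial : ℚ) ≠ 0 := by exact_mod_cast i.factorial_ne_zero
  rw [inv_smul_eq_iff₀ hi, Nat.cast_smul_eq_nsmul, ← Nat.cast_smul_eq_nsmul ℚ, smul_smul,
    mul_inv_cancel₀ hi', one_smul]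

lemma expEnd_add {a b : Module.End k g} (h : Commute a b) (ha : IsNilpotent a)
    (hb : IsNilpotent b) : expEnd k g (a + b) = expEnd k g a * expEnd k g b := by
  letI m : Module ℚ g := Module.compHom g (algebraMap ℚ k)
  rw [expEnd_eq m ha, expEnd_eq m hb, expEnd_eq m (h.isNilpotent_add ha hb),
    IsNilpotent.exp_add_of_commute h ha hb]

lemma expEnd_zero : expEnd k g 0 = 1 := by
  letI m : Module ℚ g := Module.compHom g (algebraMap ℚ k)
  rw [expEnd_eq m IsNilpotent.zero, IsNilpotent.exp_zero]

lemma expEnd_mul_neg {a : Module.End k g} (ha : IsNilpotent a) :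
    expEnd k g a * expEnd k g (-a) = 1 := by
  rw [← expEnd_add ((Commute.refl a).neg_right) ha ha.neg, add_neg_cancel, expEnd_zero]

lemma expEnd_neg_mul {a : Module.End k g} (ha : IsNilpotent a) :
    expEnd k g (-a) * expEnd k g a = 1 := by
  rw [← expEnd_add ((Commute.refl a).neg_left) ha.neg ha, neg_add_cancel, expEnd_zero]

lemma expEnd_lie {a : g} (ha : IsNilpotent (LieAlgebra.ad k g a)) (x y : g) :
    expEnd k g (LieAlgebra.ad k g a) ⁅x, y⁆ =
      ⁅expEnd k g (LieAlgebra.ad k g a) x, expEnd k g (LieAlgebra.ad k g a) y⁆ := by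
  letI m : Module ℚ g := Module.compHom g (algebraMap ℚ k)
  rw [expEnd_eq m ha]
  let _i := LieRing.toNonUnitalNonAssocRing g
  have : SMulCommClass k g g := LieAlgebra.smulCommClass k g
  have : IsScalarTower k g g := LieAlgebra.isScalarTower k g
  refine Module.End.exp_mul_of_derivation k g (LieAlgebra.ad k g a) (fun x y => ?_) ha x y
  change ⁅a, ⁅x, y⁆⁆ = ⁅x, ⁅a, y⁆⁆ + ⁅⁅a, x⁆, y⁆
  rw [leibniz_lie, add_comm]

/-- The exponential as a unit. -/
def expU (a : g) (ha : IsNilpotent (LieAlgebra.ad k g a)) : (Module.End k g)ˣ :=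
  ⟨expEnd k g (LieAlgebra.ad k g a), expEnd k g (-LieAlgebra.ad k g a),
    expEnd_mul_neg ha, expEnd_neg_mul ha⟩

lemma expU_mem (a : g) (ha : IsNilpotent (LieAlgebra.ad k g a)) :
    expU a ha ∈ adjointGroup k g :=
  Subgroup.subset_closure ⟨a, ha, rfl⟩

lemma adj_lie {u : (Module.End k g)ˣ} (hu : u ∈ adjointGroup k g) (x y : g) :
    (u : Module.End k g) ⁅x, y⁆ = ⁅(u : Module.End k g) x, (u : Module.End k g) y⁆ := by
  induction hu using Subgroup.closure_induction generalizing x y with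
  | mem u hu =>
    obtain ⟨a, ha, h⟩ := hu
    rw [h]; exact expEnd_lie ha x y
  | one => simp
  | mul u v _ _ hu hv => simp only [Units.val_mul, Module.End.mul_apply, hu, hv]
  | inv u _ hu =>
    have h1 : ∀ z, (u : Module.End k g) ((u⁻¹ : (Module.End k g)ˣ).1 z) = z := fun z => by
      rw [← Module.End.mul_apply, Units.mul_inv, Module.End.one_apply]
    have h2 : ∀ z, (u⁻¹ : (Module.End k g)ˣ).1 ((u : Module.End k g) z) = z := fun z => by
      rw [← Module.End.mul_apply, Units.inv_mul, Module.End.one_apply]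
    rw [← h2 ⁅(u⁻¹ : (Module.End k g)ˣ).1 x, (u⁻¹ : (Module.End k g)ˣ).1 y⁆, hu, h1, h1]

lemma unit_apply_inv (u : (Module.End k g)ˣ) (z : g) :
    (u : Module.End k g) ((u⁻¹ : (Module.End k g)ˣ).1 z) = z := by
  rw [← Module.End.mul_apply, Units.mul_inv, Module.End.one_apply]

lemma unit_inv_apply (u : (Module.End k g)ˣ) (z : g) :
    (u⁻¹ : (Module.End k g)ˣ).1 ((u : Module.End k g) z) = z := by
  rw [← Module.End.mul_apply, Units.inv_mul, Module.End.one_apply]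

lemma adj_ad {u : (Module.End k g)ˣ} (hu : u ∈ adjointGroup k g) (x : g) :
    LieAlgebra.ad k g ((u : Module.End k g) x) * (u : Module.End k g)
      = (u : Module.End k g) * LieAlgebra.ad k g x := by
  ext y
  simp [adj_lie hu]

/-- The Lie automorphism given by an element of the adjoint group. -/
def adjEquiv {u : (Module.End k g)ˣ} (hu : u ∈ adjointGroup k g) : g ≃ₗ⁅k⁆ g :=
  { (u : Module.End k g) with
    map_lie' := fun {x y} => adj_lie hu x y
    invFun := fun x => (u⁻¹ : (Module.End k g)ˣ).1 x
    left_inv := unit_inv_apply u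
    right_inv := unit_apply_inv u }

lemma adjEquiv_apply {u : (Module.End k g)ˣ} (hu : u ∈ adjointGroup k g) (x : g) :
    adjEquiv hu x = (u : Module.End k g) x := rfl

lemma nil_smul {X : Module.End k g} (hX : IsNilpotent X) (s : k) : IsNilpotent (s • X) :=
  hX.smul s

lemma expEnd_poly {W : Type*} [AddCommGroup W] [Module k W] [FiniteDimensional k W]
    {F : W → Module.End k g} (hF : PolyMap k F) : PolyMap k (fun w => expEnd k g (F w)) := by
  unfold expEnd
  exact PolyMap.sum _ fun i _ => (PolyMap.const _).smul (hF.pow_end i)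

lemma expEnd_hasExp (X : Module.End k g) :
    HasExp (fun s : k => expEnd k g (s • X)) 1 X := by
  rcases Nat.eq_zero_or_pos (Module.finrank k g) with h0 | hpos
  · haveI : Subsingleton g := Module.finrank_zero_iff.mp h0
    exact (HasExp.const 1).congr (fun s => Subsingleton.elim _ _) rfl (Subsingleton.elim _ _)
  · obtain ⟨m, hm⟩ : ∃ m, Module.finrank k g = m + 1 := ⟨_, (Nat.succ_pred_eq_of_pos hpos).symm⟩
    refine ⟨fun s => ∑ i ∈ Finset.range m, ((i + 2).factorial : k)⁻¹ • ((s • X) ^ i * X ^ 2), ?_, ?_⟩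
    · refine PolyMap.sum _ fun i _ => (PolyMap.const _).smul (PolyMap.mul_end (PolyMap.pow_end
        (PolyMap.smul PolyMap.id (PolyMap.const X)) i) (PolyMap.const _))
    · intro s
      simp only [expEnd]
      rw [hm, Finset.sum_range_succ', Finset.sum_range_succ', Finset.smul_sum]
      simp only [zero_add, Nat.factorial_zero, Nat.factorial_one, Nat.cast_one, inv_one, pow_zero,
        one_smul, pow_one]
      rw [add_comm, add_comm (∑ i ∈ _, _) (s • X), ← add_assoc]
      congr 1
      refine Finset.sum_congr rfl fun i _ => ?_
      rw [smul_comm, smul_pow, smul_pow, smul_mul_assoc, ← pow_add, smul_smul (s ^ 2), ← pow_add,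
        show 2 + i = i + 1 + 1 by ring, show i + 2 = i + 1 + 1 by ring]

lemma expEnd_hasExp' {X : Module.End k g} (hX : IsNilpotent X) (b b' : k) :
    HasExp (fun s : k => expEnd k g ((b + s * b') • X)) (expEnd k g (b • X))
      (expEnd k g (b • X) * (b' • X)) := by
  refine ((HasExp.const (expEnd k g (b • X))).mul_end (expEnd_hasExp (b' • X))).congr
    (fun s => ?_) (by simp) (by simp)
  rw [← expEnd_add _ (hX.smul _) ((hX.smul _).smul _), smul_smul, ← add_smul]
  exact ((Commute.refl X).smul_left _).smul_right _ |>.smul_right _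

section fam
variable {ι : Type*} [Fintype ι]

/-- Product of root exponentials along a list. -/
def uList (e : ι → g) (l : List ι) (b : ι → k) : Module.End k g :=
  (l.map fun i => expEnd k g (b i • LieAlgebra.ad k g (e i))).prod

lemma uList_mem {e : ι → g} (he : ∀ i, IsNilpotent (LieAlgebra.ad k g (e i))) (l : List ι)
    (b : ι → k) : ∃ u ∈ adjointGroup k g, (u : Module.End k g) = uList e l b := by
  induction l with
  | nil => exact ⟨1, one_mem _, rfl⟩
  | cons i l ih =>
    obtain ⟨u, hu, h⟩ := ih
    have hn : IsNilpotent (LieAlgebra.ad k g (b i • e i)) := by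
      rw [map_smul]; exact (he i).smul _
    refine ⟨expU (b i • e i) hn * u, mul_mem (expU_mem _ _) hu, ?_⟩
    rw [Units.val_mul, h]
    simp [uList, expU]

lemma uList_poly (e : ι → g) (l : List ι) : PolyMap k (uList (k := k) e l) := by
  induction l with
  | nil => exact PolyMap.const _
  | cons i l ih =>
    change PolyMap k (fun b => expEnd k g (b i • LieAlgebra.ad k g (e i)) * uList e l b)
    have h1 : PolyMap k (fun b : ι → k => b i) := PolyMap.linear (LinearMap.proj i : (ι → k) →ₗ[k] k)
    have h2 : PolyMap k (fun b : ι → k => b i • LieAlgebra.ad k g (e i)) :=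
      h1.smul (PolyMap.const (LieAlgebra.ad k g (e i)))
    exact (expEnd_poly h2).mul_end ih

lemma uList_exp {e : ι → g} (he : ∀ i, IsNilpotent (LieAlgebra.ad k g (e i))) (l : List ι)
    (b b' : ι → k) : ∃ a : g, HasExp (fun s : k => uList e l (b + s • b')) (uList e l b)
      (uList e l b * LieAlgebra.ad k g a) := by
  induction l with
  | nil => exact ⟨0, (HasExp.const 1).congr (fun s => rfl) rfl (by simp)⟩
  | cons i l ih =>
    obtain ⟨a, ih⟩ := ih
    obtain ⟨u, hu, h⟩ := uList_mem he l b
    refine ⟨b' i • (u⁻¹ : (Module.End k g)ˣ).1 (e i) + a, ?_⟩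
    refine ((expEnd_hasExp' (he i) (b i) (b' i)).mul_end ih).congr (fun s => ?_) rfl ?_
    · simp [uList]
    · change expEnd k g (b i • LieAlgebra.ad k g (e i)) * uList e l b * _ = _
      rw [← h]
      have := adj_ad hu (b' i • (u⁻¹ : (Module.End k g)ˣ).1 (e i))
      rw [map_smul, unit_apply_inv] at this
      rw [map_add, mul_add, mul_assoc, ← this, mul_assoc, mul_assoc, map_smul]

lemma uList_exp_zero {e : ι → g} (he : ∀ i, IsNilpotent (LieAlgebra.ad k g (e i))) (l : List ι)
    (b' : ι → k) : HasExp (fun s : k => uList e l (0 + s • b')) 1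
      (LieAlgebra.ad k g (l.map fun i => b' i • e i).sum) := by
  induction l with
  | nil => exact (HasExp.const 1).congr (fun s => rfl) rfl (by simp)
  | cons i l ih =>
    refine ((expEnd_hasExp' (he i) 0 (b' i)).mul_end ih).congr (fun s => ?_) ?_ ?_
    · simp [uList]
    · simp [expEnd_zero]
    · simp [expEnd_zero]

/-- The product of all root exponentials. -/
def uMap (e : ι → g) (b : ι → k) : Module.End k g := uList e Finset.univ.toList b

lemma uMap_mem {e : ι → g} (he : ∀ i, IsNilpotent (LieAlgebra.ad k g (e i)))
    (b : ι → k) : ∃ u ∈ adjointGroup k g, (u : Module.End k g) = uMap e b := uList_mem he _ b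

/-- The differential of `uMap`. -/
lemma uMap_diff {e : ι → g} (he : ∀ i, IsNilpotent (LieAlgebra.ad k g (e i))) :
    ∃ D : (ι → k) → ((ι → k) →ₗ[k] Module.End k g), PolyMap k D ∧
      (∀ b b', HasExp (fun s : k => uMap e (b + s • b')) (uMap e b) (D b b')) ∧
      (∀ b b', ∃ a : g, D b b' = uMap e b * LieAlgebra.ad k g a) ∧
      (∀ b', D 0 b' = LieAlgebra.ad k g (∑ i, b' i • e i)) ∧ uMap (k := k) e 0 = 1 := by
  obtain ⟨D, hD, h⟩ := (uList_poly (k := k) e Finset.univ.toList).exists_diff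
  have hexp : ∀ b b', HasExp (fun s : k => uMap e (b + s • b')) (uMap e b) (D b b') :=
    fun b b' => h _ b b' (HasExp.line b b')
  refine ⟨D, hD, hexp, fun b b' => ?_, fun b' => ?_, ?_⟩
  · obtain ⟨a, ha⟩ := uList_exp he Finset.univ.toList b b'
    exact ⟨a, ((hexp b b').unique ha).2⟩
  · rw [((hexp 0 b').unique (uList_exp_zero he Finset.univ.toList b')).2, Finset.sum_map_toList]
  · exact ((hexp 0 0).unique (uList_exp_zero he Finset.univ.toList 0)).1

end fam

end CV
end P6

section P7
open scoped Topology
set_option linter.unusedSectionVars false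
set_option linter.style.haveILetI false
variable {k : Type*} [Field k] [IsAlgClosed k] [CharZero k]

namespace CV

/-- Root space decomposition package for a subalgebra `t`. -/
structure RD {g : Type*} [LieRing g] [LieAlgebra k g] (t : LieSubalgebra k g) where
  n : ℕ
  root : Fin n → Module.Dual k t
  e : Fin n → g
  neg : Fin n → Fin n
  co : Fin n → t
  ab : ∀ h h' : t, ⁅(h : g), (h' : g)⁆ = 0
  root_ne : ∀ i, root i ≠ 0
  root_inj : Function.Injective root
  root_neg : ∀ i, root (neg i) = - root i
  lie_e : ∀ i (h : t), ⁅(h : g), e i⁆ = root i h • e i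
  surj : ∀ x : g, ∃ (h : t) (c : Fin n → k), x = h + ∑ i, c i • e i
  e_ne : ∀ i, e i ≠ 0
  red : ∀ i j (c : k), root j = c • root i → j = i ∨ j = neg i
  lie_neg : ∀ i, ⁅e i, e (neg i)⁆ = co i
  co_ne : ∀ i, root i (co i) ≠ 0
  nil : ∀ i, IsNilpotent (LieAlgebra.ad k g (e i))

section killing
open LieModule LieAlgebra LieAlgebra.IsKilling
variable {L : Type*} [LieRing L] [LieAlgebra k L] [FiniteDimensional k L] [LieAlgebra.IsKilling k L]

lemma killing_RD (H : LieSubalgebra k L) [H.IsCartanSubalgebra] :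
    ∃ R : RD H, ∀ h : H, ∃ d : Fin R.n → k, h = ∑ i, d i • R.co i := by
  classical
  let σ := (Fintype.equivFin {β : Weight k H L // β.IsNonZero}).symm
  choose e he0 he1 using fun β : {β : Weight k H L // β.IsNonZero} => β.1.exists_ne_zero
  let neg : {β : Weight k H L // β.IsNonZero} → {β : Weight k H L // β.IsNonZero} :=
    fun β => ⟨-β.1, β.2.neg⟩
  have hkf : ∀ β, killingForm k L (e β) (e (neg β)) ≠ 0 := by
    intro β h0
    have h1 : ∀ y ∈ rootSpace H (-(β.1 : H → k)), killingForm k L (e β) y = 0 := by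
      intro y hy
      obtain ⟨c, hc⟩ := (finrank_eq_one_iff_of_nonzero' (⟨e (neg β), he0 (neg β)⟩ :
        rootSpace H (neg β).1) (by intro h; exact he1 _ (congrArg Subtype.val h))).mp
        (finrank_rootSpace_eq_one (neg β).1 (neg β).2) ⟨y, hy⟩
      have : c • e (neg β) = y := congrArg Subtype.val hc
      rw [← this, map_smul, h0, smul_zero]
    have := mem_ker_killingForm_of_mem_rootSpace_of_forall_rootSpace_neg k L H (he0 β) h1
    rw [LieAlgebra.IsKilling.ker_killingForm_eq_bot] at this
    exact he1 β this
  have hlie : ∀ β, ⁅e β, e (neg β)⁆ = killingForm k L (e β) (e (neg β)) •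
      ((cartanEquivDual H).symm (β.1 : H →ₗ[k] k) : L) := fun β =>
    lie_eq_killingForm_smul_of_mem_rootSpace_of_mem_rootSpace_neg (he0 β) (he0 (neg β))
  have key : ∀ h : H, ∃ d : Fin (Fintype.card {β : Weight k H L // β.IsNonZero}) → k,
      h = ∑ i, d i • (killingForm k L (e (σ i)) (e (neg (σ i))) •
      (cartanEquivDual H).symm ((σ i).1 : H →ₗ[k] k)) := by
    intro h
    have h1 := span_weight_isNonZero_eq_top (K := k) (L := L) (H := H)
    have h2 : cartanEquivDual H h ∈ Submodule.span k
        ({α : Weight k H L | α.IsNonZero}.image (Weight.toLinear k H L)) := by rw [h1]; trivial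
    have h3 : ∃ d : Fin (Fintype.card {β : Weight k H L // β.IsNonZero}) → k,
        cartanEquivDual H h = ∑ i, d i • (σ i).1.toLinear := by
      generalize cartanEquivDual H h = y at h2
      induction h2 using Submodule.span_induction with
      | mem x hx =>
        obtain ⟨χ, hχ, rfl⟩ := hx
        refine ⟨Pi.single (σ.symm ⟨χ, hχ⟩) 1, ?_⟩
        rw [Finset.sum_eq_single (σ.symm ⟨χ, hχ⟩)]
        · simp
        · intro j _ hj; simp [Pi.single_eq_of_ne hj]
        · simp
      | zero => exact ⟨0, by simp⟩
      | add x y _ _ hx hy =>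
        obtain ⟨c, rfl⟩ := hx
        obtain ⟨c', rfl⟩ := hy
        exact ⟨c + c', by simp only [Pi.add_apply, add_smul, Finset.sum_add_distrib]⟩
      | smul a x _ hx =>
        obtain ⟨c, rfl⟩ := hx
        exact ⟨a • c, by simp only [Pi.smul_apply, smul_assoc, Finset.smul_sum]⟩
    have hgen : ∀ (a K : k) (_ : K ≠ 0) (w : Module.Dual k H),
        a • w = cartanEquivDual H ((a * K⁻¹) • (K • (cartanEquivDual H).symm w)) := by
      intro a K hK w
      rw [smul_smul, mul_assoc, inv_mul_cancel₀ hK, mul_one, map_smul,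
        LinearEquiv.apply_symm_apply]
    obtain ⟨d, hd⟩ := h3
    refine ⟨fun i => d i * (killingForm k L (e (σ i)) (e (neg (σ i))))⁻¹, ?_⟩
    apply (cartanEquivDual H).injective
    rw [hd, map_sum]
    refine Finset.sum_congr rfl fun i _ => ?_
    exact hgen _ _ (hkf _) _
  refine ⟨⟨Fintype.card _, fun i => (σ i).1.toLinear, fun i => e (σ i),
    fun i => σ.symm (neg (σ i)),
    fun i => killingForm k L (e (σ i)) (e (neg (σ i))) •
      (cartanEquivDual H).symm ((σ i).1 : H →ₗ[k] k), ?_, ?_, ?_, ?_, ?_, ?_, ?_, ?_, ?_, ?_, ?_⟩, ?_⟩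
  · intro h h'
    have : ⁅h, h'⁆ = 0 := trivial_lie_zero _ _ _ _
    exact congrArg Subtype.val this
  · intro i
    exact Weight.coe_toLinear_ne_zero_iff.mpr (σ i).2
  · intro i j h
    apply σ.injective
    apply Subtype.ext
    apply DFunLike.coe_injective
    ext x
    exact DFunLike.congr_fun h x
  · intro i
    simp only [Equiv.apply_symm_apply]
    rfl
  · intro i h
    exact lie_eq_smul_of_mem_rootSpace (he0 (σ i)) h
  · intro x
    have hx : x ∈ (⨆ χ : Weight k H L, genWeightSpace L χ) := by
      rw [iSup_genWeightSpace_eq_top' k H L]; trivial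
    induction hx using LieSubmodule.iSup_induction' with
    | mem χ x hx =>
      by_cases hχ : χ.IsZero
      · have hx' : x ∈ rootSpace H (0 : H → k) := by
          rw [show ((χ : H → k)) = 0 from hχ] at hx; exact hx
        rw [rootSpace_zero_eq] at hx'
        replace hx := hx'
        exact ⟨⟨x, hx⟩, 0, by simp⟩
      · obtain ⟨c, hc⟩ := (finrank_eq_one_iff_of_nonzero' (⟨e ⟨χ, hχ⟩, he0 ⟨χ, hχ⟩⟩ :
          rootSpace H χ) (by intro h; exact he1 _ (congrArg Subtype.val h))).mp
          (finrank_rootSpace_eq_one χ hχ) ⟨x, hx⟩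
        have : c • e ⟨χ, hχ⟩ = x := congrArg Subtype.val hc
        refine ⟨0, Pi.single (σ.symm ⟨χ, hχ⟩) c, ?_⟩
        rw [Finset.sum_eq_single (σ.symm ⟨χ, hχ⟩)]
        · simp [this]
        · intro j _ hj; simp [Pi.single_eq_of_ne hj]
        · simp
    | zero => exact ⟨0, 0, by simp⟩
    | add x y _ _ hx hy =>
      obtain ⟨h, c, rfl⟩ := hx
      obtain ⟨h', c', rfl⟩ := hy
      refine ⟨h + h', c + c', ?_⟩
      simp only [Pi.add_apply, add_smul, Finset.sum_add_distrib, AddMemClass.coe_add]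
      abel
  · exact fun i => he1 _
  · intro i j c h
    rcases eq_neg_or_eq_of_eq_smul (σ i).1 (σ j).1 (σ j).2 c
      (by ext x; exact DFunLike.congr_fun h x) with h | h
    · right; rw [Equiv.eq_symm_apply]; exact Subtype.ext h
    · left; exact σ.injective (Subtype.ext h)
  · intro i
    simp only [Equiv.apply_symm_apply]
    exact hlie (σ i)
  · intro i
    rw [map_smul, smul_eq_mul]
    exact mul_ne_zero (hkf _) (root_apply_cartanEquivDual_symm_ne_zero (σ i).2)
  · intro i
    refine LieAlgebra.isNilpotent_ad_of_mem_rootSpace H ?_ (he0 (σ i))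
    exact (σ i).2
  · exact key

end killing

end CV
end P7

section P8
open scoped Topology
set_option linter.unusedSectionVars false
set_option linter.style.haveILetI false
variable {k : Type*} [Field k] [IsAlgClosed k] [CharZero k]

namespace CV
variable {g : Type*} [LieRing g] [LieAlgebra k g] [FiniteDimensional k g]

lemma central_of_mem {x : g} (hx : x ∈ LieAlgebra.center k g) (y : g) : ⁅x, y⁆ = 0 := by
  rw [← lie_skew, (LieModule.mem_maxTrivSubmodule k g g x).mp hx y, neg_zero]

lemma mem_center_of {x : g} (hx : ∀ y : g, ⁅x, y⁆ = 0) : x ∈ LieAlgebra.center k g := by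
  rw [LieModule.mem_maxTrivSubmodule]
  intro y
  rw [← lie_skew, hx y, neg_zero]

lemma RD_lift {Q : Type*} [LieRing Q] [LieAlgebra k Q] [FiniteDimensional k Q]
    (hred : LieAlgebra.radical k g = LieAlgebra.center k g)
    (t : LieSubalgebra k g) (ht : t.IsCartanSubalgebra) (π : g →ₗ⁅k⁆ Q)
    (hπ : Function.Surjective π) (hker : ∀ x : g, π x = 0 ↔ ∀ y : g, ⁅x, y⁆ = 0) :
    Nonempty (RD t) := by
  classical
  have hker' : ∀ x : g, π x = 0 → ∀ y : g, ⁅y, x⁆ = 0 := by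
    intro x hx y
    rw [← lie_skew, (hker x).mp hx y, neg_zero]
  haveI : LieAlgebra.HasTrivialRadical k Q := by
    rw [LieAlgebra.hasTrivialRadical_iff_no_abelian_ideals]
    intro I hI
    have h1 : ∀ x y : g, π x ∈ I → π y ∈ I → ⁅π x, π y⁆ = 0 := by
      intro x y hx hy
      have : ⁅(⟨π x, hx⟩ : I), (⟨π y, hy⟩ : I)⁆ = 0 := trivial_lie_zero _ _ _ _
      exact congrArg Subtype.val this
    set J : LieIdeal k g := I.comap π with hJ
    have hJJ : ⁅J, J⁆ ≤ LieAlgebra.center k g := by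
      rw [LieSubmodule.lieIdeal_oper_eq_span, LieSubmodule.lieSpan_le]
      rintro _ ⟨⟨x, hx⟩, ⟨y, hy⟩, rfl⟩
      apply mem_center_of
      rw [← hker]
      change π ⁅x, y⁆ = 0
      rw [LieHom.map_lie]
      exact h1 x y hx hy
    have hs : LieAlgebra.derivedSeriesOfIdeal k g 2 J = ⊥ := by
      rw [LieAlgebra.derivedSeriesOfIdeal_succ, LieAlgebra.derivedSeriesOfIdeal_succ,
        LieAlgebra.derivedSeriesOfIdeal_zero, eq_bot_iff, LieSubmodule.lieIdeal_oper_eq_span,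
        LieSubmodule.lieSpan_le]
      rintro _ ⟨⟨x, hx⟩, ⟨y, hy⟩, rfl⟩
      exact central_of_mem (hJJ hx) y
    have hsol : LieAlgebra.IsSolvable J :=
      (LieAlgebra.isSolvable_iff k J).mpr ⟨2, (LieIdeal.derivedSeries_eq_bot_iff J 2).mpr hs⟩
    have hle : J ≤ LieAlgebra.center k g := by
      rw [← hred]
      exact (LieAlgebra.LieIdeal.solvable_iff_le_radical k g J).mp hsol
    rw [eq_bot_iff]
    intro y hy
    obtain ⟨x, rfl⟩ := hπ y
    rw [LieSubmodule.mem_bot, hker]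
    exact central_of_mem (hle hy)
  have hct : ∀ x : g, π x = 0 → x ∈ t := by
    intro x hx
    rw [← ht.self_normalizing, LieSubalgebra.mem_normalizer_iff]
    intro y hy
    rw [(hker x).mp hx]; exact t.zero_mem
  let tb : LieSubalgebra k Q := (π.comp t.incl).range
  let ρ : t →ₗ⁅k⁆ tb := (π.comp t.incl).rangeRestrict
  have hρ : Function.Surjective ρ := (π.comp t.incl).surjective_rangeRestrict
  have hρc : ∀ h : t, (ρ h : Q) = π h := fun h => rfl
  haveI := ht
  haveI : tb.IsCartanSubalgebra := by
    refine ⟨hρ.lieAlgebra_isNilpotent, ?_⟩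
    refine le_antisymm ?_ (LieSubalgebra.le_normalizer _)
    intro y hy
    obtain ⟨x, rfl⟩ := hπ y
    rw [LieSubalgebra.mem_normalizer_iff] at hy
    have hx : x ∈ t := by
      rw [← ht.self_normalizing, LieSubalgebra.mem_normalizer_iff]
      intro z hz
      obtain ⟨w, hw⟩ := hy (π z) ⟨⟨z, hz⟩, rfl⟩
      have hw' : π (w : g) = ⁅π x, π z⁆ := hw
      have : ⁅x, z⁆ - (w : g) ∈ t := hct _ (by rw [map_sub, LieHom.map_lie, hw', sub_self])
      have h2 := t.add_mem this w.2
      rwa [sub_add_cancel] at h2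
    exact ⟨⟨x, hx⟩, rfl⟩
  obtain ⟨R, hR⟩ := killing_RD (k := k) tb
  let root : Fin R.n → Module.Dual k t := fun i => R.root i ∘ₗ (ρ : t →ₗ[k] tb)
  have hroot : ∀ i h, root i h = R.root i (ρ h) := fun i h => rfl
  have hrne : ∀ i, root i ≠ 0 := by
    intro i h
    apply R.root_ne i
    ext y
    obtain ⟨x, rfl⟩ := hρ y
    exact LinearMap.congr_fun h x
  have hh0 : ∀ i, ∃ h0 : t, root i h0 = 2 := fun i =>
    LinearMap.surjective (hrne i) 2
  choose h0 hh0 using hh0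
  choose e' he' using fun i => hπ (R.e i)
  let e : Fin R.n → g := fun i => (2⁻¹ : k) • ⁅(h0 i : g), e' i⁆
  have hpe : ∀ i, π (e i) = R.e i := by
    intro i
    change π ((2⁻¹ : k) • ⁅(h0 i : g), e' i⁆) = _
    rw [map_smul, LieHom.map_lie, he', ← hρc, R.lie_e, ← hroot, hh0, smul_smul,
      inv_mul_cancel₀ two_ne_zero, one_smul]
  have hlie0 : ∀ i, ⁅(h0 i : g), e i⁆ = (2 : k) • e i := by
    intro i
    have h1 : π (e i - e' i) = 0 := by rw [map_sub, hpe, he', sub_self]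
    have h2 := hker' _ h1 (h0 i : g)
    rw [lie_sub, sub_eq_zero] at h2
    rw [h2, smul_smul, mul_inv_cancel₀ two_ne_zero, one_smul]
  clear_value e
  have hlie : ∀ i (h : t), ⁅(h : g), e i⁆ = root i h • e i := by
    intro i h
    have h1 : π (⁅(h : g), e i⁆ - root i h • e i) = 0 := by
      rw [map_sub, LieHom.map_lie, hpe, map_smul, hpe, ← hρc, R.lie_e, hroot, sub_self]
    have h2 := hker' _ h1 (h0 i : g)
    have h3 : π ⁅(h0 i : g), (h : g)⁆ = 0 := by
      rw [LieHom.map_lie, ← hρc, ← hρc, R.ab]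
    rw [lie_sub, lie_smul (root i h), hlie0, leibniz_lie, (hker _).mp h3, zero_add, hlie0, lie_smul,
      smul_comm, ← smul_sub] at h2
    exact sub_eq_zero.mp ((smul_eq_zero.mp h2).resolve_left two_ne_zero)
  have hco : ∀ i, ∃ c : t, (c : g) = ⁅e i, e (R.neg i)⁆ := by
    intro i
    obtain ⟨x, hx⟩ := hρ (R.co i)
    have h1 : π (⁅e i, e (R.neg i)⁆ - (x : g)) = 0 := by
      rw [map_sub, LieHom.map_lie, hpe, hpe, R.lie_neg, ← hρc, hx, sub_self]
    have h2 := t.add_mem (hct _ h1) x.2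
    rw [sub_add_cancel] at h2
    exact ⟨⟨_, h2⟩, rfl⟩
  choose co hco using hco
  have hrco : ∀ i, ρ (co i) = R.co i := by
    intro i
    apply Subtype.ext
    rw [hρc, hco, LieHom.map_lie, hpe, hpe, R.lie_neg]
  have hrneg : ∀ i, root (R.neg i) = - root i := by
    intro i; ext h; rw [hroot, R.root_neg]; rfl
  refine ⟨⟨R.n, root, e, R.neg, co, ?_, hrne, ?_, hrneg, hlie, ?_, ?_, ?_, fun i => (hco i).symm, ?_, ?_⟩⟩
  · intro h h'
    obtain ⟨d, hd⟩ := hR (ρ h')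
    have h1 : π ((h' : g) - ∑ i, d i • (co i : g)) = 0 := by
      rw [map_sub, ← hρc, hd, map_sum, sub_eq_zero]
      rw [AddSubmonoidClass.coe_finsetSum]
      refine Finset.sum_congr rfl fun i _ => ?_
      rw [map_smul, ← hρc, hrco]; rfl
    have h2 := hker' _ h1 (h : g)
    rw [lie_sub, sub_eq_zero] at h2
    rw [h2, lie_sum]
    refine Finset.sum_eq_zero fun i _ => ?_
    rw [lie_smul, hco, leibniz_lie, hlie, hlie, hrneg, smul_lie, lie_smul]
    simp [← add_smul]
  · intro i j h
    apply R.root_inj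
    ext y
    obtain ⟨x, rfl⟩ := hρ y
    exact LinearMap.congr_fun h x
  · intro x
    obtain ⟨hb, c, hx⟩ := R.surj (π x)
    obtain ⟨h, rfl⟩ := hρ hb
    have h1 : π (x - ∑ i, c i • e i - (h : g)) = 0 := by
      rw [map_sub, map_sub, hx, map_sum, ← hρc]
      simp only [map_smul, hpe]
      abel
    have h2 := t.add_mem (hct _ h1) h.2
    rw [sub_add_cancel] at h2
    exact ⟨⟨_, h2⟩, c, by simp⟩
  · intro i h
    apply R.e_ne i
    rw [← hpe, h, map_zero]
  · intro i j c h
    refine R.red i j c ?_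
    ext y
    obtain ⟨x, rfl⟩ := hρ y
    exact LinearMap.congr_fun h x
  · intro i
    rw [hroot, hrco]; exact R.co_ne i
  · intro i
    obtain ⟨m, hm⟩ := R.nil i
    refine ⟨m + 1, ?_⟩
    have h1 : ∀ m x, π ((LieAlgebra.ad k g (e i) ^ m) x) = (LieAlgebra.ad k Q (R.e i) ^ m) (π x) := by
      intro m
      induction m with
      | zero => intro x; rfl
      | succ m ih =>
        intro x
        rw [pow_succ', pow_succ', Module.End.mul_apply, Module.End.mul_apply, LieAlgebra.ad_apply,
          LieHom.map_lie, ih, hpe, LieAlgebra.ad_apply]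
    ext x
    rw [pow_succ', Module.End.mul_apply, LieAlgebra.ad_apply]
    refine hker' _ ?_ _
    rw [h1, hm]; rfl

lemma reductive_RD (hred : LieAlgebra.radical k g = LieAlgebra.center k g)
    (t : LieSubalgebra k g) (ht : t.IsCartanSubalgebra) : Nonempty (RD t) := by
  letI : LieRing (Module.End k g) := LieRing.ofAssociativeRing
  refine RD_lift hred t ht (LieAlgebra.ad k g).rangeRestrict
    (LieAlgebra.ad k g).surjective_rangeRestrict ?_
  intro x
  constructor
  · intro h y
    have := congrArg Subtype.val h
    exact LinearMap.congr_fun (this : LieAlgebra.ad k g x = 0) y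
  · intro h
    apply Subtype.ext
    change LieAlgebra.ad k g x = 0
    ext y
    exact h y

end CV
end P8

section P9
open scoped Topology
set_option linter.unusedSectionVars false
set_option linter.style.haveILetI false
variable {k : Type*} [Field k] [IsAlgClosed k] [CharZero k]

namespace CV
variable {g : Type*} [LieRing g] [LieAlgebra k g] [FiniteDimensional k g]
variable {t : LieSubalgebra k g}

lemma exists_avoid {ι V : Type*} [Finite ι] [AddCommGroup V] [Module k V]
    (f : ι → Module.Dual k V) (hf : ∀ i, f i ≠ 0) : ∃ v, ∀ i, f i v ≠ 0 := by
  haveI : Infinite k := CharZero.infinite k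
  refine Module.Dual.exists_forall_ne_zero_of_forall_exists f fun i => ?_
  by_contra h
  push Not at h
  exact hf i (LinearMap.ext h)

lemma RD.exists_reg (R : RD t) : ∃ h : t, (∀ i, R.root i h ≠ 0) ∧
    Function.Injective (fun i => R.root i h) := by
  classical
  let f : Fin R.n ⊕ {p : Fin R.n × Fin R.n // p.1 ≠ p.2} → Module.Dual k t
    | .inl i => R.root i
    | .inr p => R.root p.1.1 - R.root p.1.2
  obtain ⟨h, hh⟩ := exists_avoid f (by
    rintro (i | ⟨⟨i, j⟩, hp⟩)
    · exact R.root_ne i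
    · exact sub_ne_zero.mpr (fun h => hp (R.root_inj h)))
  refine ⟨h, fun i => hh (.inl i), fun i j hij => ?_⟩
  by_contra hne
  exact hh (.inr ⟨(i, j), hne⟩) (sub_eq_zero.mpr hij)

lemma RD.neg_ne (R : RD t) (i : Fin R.n) : R.neg i ≠ i := by
  intro h
  have h1 := R.root_neg i
  rw [h, eq_neg_iff_add_eq_zero, ← two_smul k] at h1
  exact R.root_ne i ((smul_eq_zero.mp h1).resolve_left two_ne_zero)

lemma RD.neg_neg (R : RD t) (i : Fin R.n) : R.neg (R.neg i) = i := by
  apply R.root_inj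
  rw [R.root_neg, R.root_neg, _root_.neg_neg]

lemma RD.indep (R : RD t) (h : t) (c : Fin R.n → k) (h0 : (h : g) + ∑ i, c i • R.e i = 0) :
    h = 0 ∧ c = 0 := by
  classical
  obtain ⟨h1, hr, hi⟩ := R.exists_reg
  have hev : ∀ i, (LieAlgebra.ad k g (h1 : g)).HasEigenvector (R.root i h1) (R.e i) := fun i =>
    ⟨Module.End.mem_eigenspace_iff.mpr (R.lie_e i h1), R.e_ne i⟩
  by_cases hh : h = 0
  · refine ⟨hh, ?_⟩
    have hl := Module.End.eigenvectors_linearIndependent' (LieAlgebra.ad k g (h1 : g))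
      (fun i => R.root i h1) hi R.e hev
    rw [Fintype.linearIndependent_iff] at hl
    subst hh
    funext i
    exact hl c (by simpa using h0) i
  · exfalso
    have hl := Module.End.eigenvectors_linearIndependent' (LieAlgebra.ad k g (h1 : g))
      (fun i : Option (Fin R.n) => i.elim 0 (fun i => R.root i h1)) (by
        rintro (_ | i) (_ | j) hij
        · rfl
        · exact absurd hij.symm (hr j)
        · exact absurd hij (hr i)
        · exact congrArg some (hi hij))
      (fun i : Option (Fin R.n) => i.elim (h : g) R.e) (by
        rintro (_ | i)
        · refine ⟨Module.End.mem_eigenspace_iff.mpr ?_, fun h' => hh (Subtype.ext h')⟩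
          simp [R.ab]
        · exact hev i)
    rw [Fintype.linearIndependent_iff] at hl
    have := hl (fun i => i.elim 1 c) (by
      rw [Fintype.sum_option]; simpa using h0) none
    simp at this

/-- The map realizing the root decomposition. -/
def RD.lin (R : RD t) : (t × (Fin R.n → k)) →ₗ[k] g :=
  LinearMap.coprod t.incl.toLinearMap (Fintype.linearCombination k R.e)

lemma RD.lin_apply (R : RD t) (h : t) (c : Fin R.n → k) :
    R.lin (h, c) = h + ∑ i, c i • R.e i := by
  simp [RD.lin, Fintype.linearCombination_apply]

lemma RD.lin_bij (R : RD t) : Function.Bijective R.lin := by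
  constructor
  · rw [← LinearMap.ker_eq_bot, LinearMap.ker_eq_bot']
    rintro ⟨h, c⟩ h0
    rw [R.lin_apply] at h0
    obtain ⟨rfl, rfl⟩ := R.indep h c h0
    rfl
  · intro x
    obtain ⟨h, c, hx⟩ := R.surj x
    exact ⟨(h, c), by rw [R.lin_apply, hx]⟩

/-- The linear equivalence of the root decomposition. -/
def RD.eqv (R : RD t) : (t × (Fin R.n → k)) ≃ₗ[k] g := LinearEquiv.ofBijective R.lin R.lin_bij

lemma RD.eqv_apply (R : RD t) (h : t) (c : Fin R.n → k) :
    R.eqv (h, c) = h + ∑ i, c i • R.e i := R.lin_apply h c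

lemma RD.finrank_eq (R : RD t) : Module.finrank k g = Module.finrank k t + R.n := by
  rw [← R.eqv.finrank_eq, Module.finrank_prod]; simp

lemma RD.ext (R : RD t) {h h' : t} {c c' : Fin R.n → k}
    (H : (h : g) + ∑ i, c i • R.e i = h' + ∑ i, c' i • R.e i) : h = h' ∧ c = c' := by
  rw [← R.eqv_apply, ← R.eqv_apply] at H
  have := R.eqv.injective H
  exact ⟨congrArg Prod.fst this, congrArg Prod.snd this⟩

lemma RD.e_lie (R : RD t) (i : Fin R.n) (h : t) : ⁅R.e i, (h : g)⁆ = - R.root i h • R.e i := by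
  rw [← lie_skew, R.lie_e, neg_smul]

lemma RD.wt (R : RD t) (γ : Module.Dual k t) (hγ : γ ≠ 0) (x : g) (hx : x ≠ 0)
    (hw : ∀ h : t, ⁅(h : g), x⁆ = γ h • x) : ∃ i, R.root i = γ ∧ ∃ c : k, x = c • R.e i := by
  classical
  obtain ⟨h0, c, rfl⟩ := R.surj x
  have h1 : ∀ h : t, γ h • h0 = 0 ∧ ∀ i, γ h * c i = c i * R.root i h := by
    intro h
    have h2 := hw h
    rw [lie_add, R.ab, lie_sum, smul_add, Finset.smul_sum] at h2
    have h3 : ((0 : t) : g) + ∑ i, (c i * R.root i h) • R.e i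
        = ((γ h • h0 : t) : g) + ∑ i, (γ h * c i) • R.e i := by
      simpa [lie_smul, R.lie_e, smul_smul] using h2
    obtain ⟨h4, h5⟩ := R.ext h3
    exact ⟨h4.symm, fun i => (congrFun h5 i).symm⟩
  obtain ⟨h, hh⟩ : ∃ h, γ h ≠ 0 := by
    by_contra hc; push Not at hc; exact hγ (LinearMap.ext hc)
  have hh0 : h0 = 0 := (smul_eq_zero.mp (h1 h).1).resolve_left hh
  have hci : ∃ i, c i ≠ 0 := by
    by_contra hc; push Not at hc; exact hx (by simp [hh0, hc])
  obtain ⟨i, hi⟩ := hci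
  have key : ∀ j, c j ≠ 0 → R.root j = γ := by
    intro j hj
    ext h'
    have := (h1 h').2 j
    rw [mul_comm] at this
    exact (mul_left_cancel₀ hj this).symm
  refine ⟨i, key i hi, c i, ?_⟩
  rw [hh0, Finset.sum_eq_single i]
  · simp
  · intro j _ hj
    have : c j = 0 := by
      by_contra h'
      exact hj (R.root_inj ((key j h').trans (key i hi).symm))
    rw [this, zero_smul]
  · simp

lemma RD.of_isRootOf (R : RD t) {γ : Module.Dual k t} (h : IsRootOf k g t γ) :
    ∃ i, R.root i = γ := by
  obtain ⟨x, hx, hx0⟩ := (Submodule.ne_bot_iff _).mp h.2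
  obtain ⟨i, hi, _⟩ := R.wt γ h.1 x hx0 hx
  exact ⟨i, hi⟩

/-- A generic point of the kernel of a root. -/
lemma RD.exists_ker (R : RD t) (i : Fin R.n) : ∃ h : t, R.root i h = 0 ∧
    ∀ j, j ≠ i → j ≠ R.neg i → R.root j h ≠ 0 := by
  classical
  let f : {j // j ≠ i ∧ j ≠ R.neg i} → Module.Dual k (LinearMap.ker (R.root i)) :=
    fun j => R.root j.1 ∘ₗ (LinearMap.ker (R.root i)).subtype
  obtain ⟨h, hh⟩ := exists_avoid f (by
    rintro ⟨j, hj1, hj2⟩ h0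
    have h1 : ⨅ _ : Unit, LinearMap.ker (R.root i) ≤ LinearMap.ker (R.root j) := by
      intro x hx
      rw [Submodule.mem_iInf] at hx
      exact LinearMap.congr_fun h0 ⟨x, hx ()⟩
    have h2 := mem_span_of_iInf_ker_le_ker (L := fun _ : Unit => R.root i) h1
    rw [Set.range_const, Submodule.mem_span_singleton] at h2
    obtain ⟨c, hc⟩ := h2
    rcases R.red i j c hc.symm with h | h
    · exact hj1 h
    · exact hj2 h)
  exact ⟨h, h.2, fun j h1 h2 => hh ⟨j, h1, h2⟩⟩

/-- Powers of `ad h` in the root decomposition. -/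
lemma RD.pow_ad (R : RD t) (h h' : t) (c : Fin R.n → k) (m : ℕ) :
    (LieAlgebra.ad k g (h : g) ^ (m + 1)) ((h' : g) + ∑ i, c i • R.e i)
      = ∑ i, (R.root i h ^ (m + 1) * c i) • R.e i := by
  induction m with
  | zero =>
    simp [R.ab, lie_sum, R.lie_e, smul_smul, mul_comm]
  | succ m ih =>
    rw [pow_succ', Module.End.mul_apply, ih, LieAlgebra.ad_apply, lie_sum]
    refine Finset.sum_congr rfl fun i _ => ?_
    rw [lie_smul, R.lie_e, smul_smul]
    congr 1; ring

/-- The dimension of the generalized null space of `ad h`. -/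
lemma RD.finrank_ker_pow (R : RD t) (h : t) (S : Finset (Fin R.n)) (m : ℕ) (hm : m ≠ 0)
    (hS : ∀ i, i ∉ S → R.root i h ≠ 0) :
    Module.finrank k (LinearMap.ker (LieAlgebra.ad k g (h : g) ^ m))
      ≤ Module.finrank k t + S.card := by
  classical
  obtain ⟨m, rfl⟩ := Nat.exists_eq_succ_of_ne_zero hm
  let φ : LinearMap.ker (LieAlgebra.ad k g (h : g) ^ (m + 1)) →ₗ[k] t × (S → k) :=
    (LinearMap.prodMap LinearMap.id (LinearMap.funLeft k k Subtype.val)) ∘ₗ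
      (R.eqv.symm : g →ₗ[k] _) ∘ₗ Submodule.subtype _
  have hφ : Function.Injective φ := by
    rw [← LinearMap.ker_eq_bot, LinearMap.ker_eq_bot']
    rintro ⟨x, hx⟩ h0
    obtain ⟨h', c, rfl⟩ := R.surj x
    have h1 : φ ⟨(h' : g) + ∑ i, c i • R.e i, hx⟩ = (h', fun i : S => c i) := by
      simp only [φ, LinearMap.comp_apply, Submodule.subtype_apply, ← R.eqv_apply]
      simp
      rfl
    rw [h1] at h0
    have h2 : h' = 0 := congrArg Prod.fst h0
    have h3 : ∀ i : S, c i = 0 := fun i => congrFun (congrArg Prod.snd h0) i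
    have h4 : ((0 : t) : g) + ∑ i, (R.root i h ^ (m + 1) * c i) • R.e i = 0 := by
      have := LinearMap.mem_ker.mp hx
      rw [R.pow_ad] at this
      simpa using this
    have h5 := (R.indep _ _ h4).2
    have h6 : c = 0 := by
      funext i
      by_cases hi : i ∈ S
      · exact h3 ⟨i, hi⟩
      · exact (mul_eq_zero.mp (congrFun h5 i)).resolve_left (pow_ne_zero _ (hS i hi))
    apply Subtype.ext
    simp [h2, h6]
  have := LinearMap.finrank_le_finrank_of_injective hφ
  rwa [Module.finrank_prod, Module.finrank_fintype_fun_eq_card, Fintype.card_coe] at this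

/-- A subspace stable under `t` is spanned by root vectors. -/
lemma RD.mem_of_stable (R : RD t) (E : Submodule k g) (hE : ∀ h : t, ∀ x ∈ E, ⁅(h : g), x⁆ ∈ E)
    (h : t) (c : Fin R.n → k) (hx : (h : g) + ∑ i, c i • R.e i ∈ E) (i : Fin R.n) (hi : c i ≠ 0) :
    R.e i ∈ E := by
  classical
  obtain ⟨h1, hr, hinj⟩ := R.exists_reg
  let P : Polynomial k := Polynomial.X * ∏ j ∈ Finset.univ.erase i,
    (Polynomial.X - Polynomial.C (R.root j h1))
  have hst : ∀ x ∈ E, Polynomial.aeval (LieAlgebra.ad k g (h1 : g)) P x ∈ E := by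
    generalize P = Q
    intro x hx
    induction Q using Polynomial.induction_on' with
    | add p q hp hq => rw [map_add]; exact E.add_mem hp hq
    | monomial m a =>
      rw [Polynomial.aeval_monomial, Module.End.mul_apply, Module.algebraMap_end_apply]
      refine E.smul_mem _ ?_
      clear * - hE hx
      induction m with
      | zero => exact hx
      | succ m ih =>
        rw [pow_succ', Module.End.mul_apply]
        exact hE h1 _ ih
  have hP0 : P.eval 0 = 0 := by simp [P]
  have hPj : ∀ j, j ≠ i → P.eval (R.root j h1) = 0 := by
    intro j hj
    rw [Polynomial.eval_mul, Polynomial.eval_prod,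
      Finset.prod_eq_zero (Finset.mem_erase.mpr ⟨hj, Finset.mem_univ j⟩) (by simp), mul_zero]
  have hPi : P.eval (R.root i h1) ≠ 0 := by
    rw [Polynomial.eval_mul, Polynomial.eval_prod]
    refine mul_ne_zero (by simpa using hr i) (Finset.prod_ne_zero_iff.mpr fun j hj => ?_)
    simp only [Polynomial.eval_sub, Polynomial.eval_X, Polynomial.eval_C]
    exact sub_ne_zero.mpr fun h' => (Finset.ne_of_mem_erase hj) (hinj h'.symm)
  have h2 := hst _ hx
  have hh : Polynomial.aeval (LieAlgebra.ad k g (h1 : g)) P (h : g) = 0 := by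
    rw [Module.End.aeval_apply_of_mem_apply_eq_smul (μ := 0) (by simp [R.ab]), hP0, zero_smul]
  have he : ∀ j, Polynomial.aeval (LieAlgebra.ad k g (h1 : g)) P (R.e j)
      = P.eval (R.root j h1) • R.e j := fun j =>
    Module.End.aeval_apply_of_mem_apply_eq_smul (R.lie_e j h1)
  rw [map_add, hh, zero_add, map_sum, Finset.sum_eq_single i, map_smul, he, smul_smul] at h2
  · have h3 := E.smul_mem ((c i * P.eval (R.root i h1))⁻¹) h2
    rwa [smul_smul, inv_mul_cancel₀ (mul_ne_zero hi hPi), one_smul] at h3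
  · intro j _ hj
    rw [map_smul, he, hPj j hj, zero_smul, smul_zero]
  · simp

end CV
end P9

section P10
open scoped Topology
set_option linter.unusedSectionVars false
set_option linter.style.haveILetI false
variable {k : Type*} [Field k] [IsAlgClosed k] [CharZero k]

namespace CV
variable {g : Type*} [LieRing g] [LieAlgebra k g] [FiniteDimensional k g]
variable {t : LieSubalgebra k g}

/-- The generalized null space of `ad x`. -/
def nulls (x : g) : Submodule k g := LinearMap.ker (LieAlgebra.ad k g x ^ Module.finrank k g)

lemma engel_eq_nulls (x : g) : (LieSubalgebra.engel k x).toSubmodule = nulls x := by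
  change (LieAlgebra.ad k g x).maxGenEigenspace 0 = _
  rw [Module.End.maxGenEigenspace_eq_genEigenspace_finrank, Module.End.genEigenspace_nat, zero_smul,
    sub_zero]
  rfl

lemma mem_nulls {x y : g} : y ∈ (nulls x : Submodule k g) ↔
    ∃ n : ℕ, (LieAlgebra.ad k g x ^ n) y = 0 := by
  rw [← engel_eq_nulls, ← LieSubalgebra.mem_engel_iff]; rfl

lemma ad_poly : PolyMap k (fun x : g => LieAlgebra.ad k g x) :=
  PolyMap.linear (LieAlgebra.ad k g : g →ₗ[k] Module.End k g)

lemma reg_nulls (x₀ : g) : ∃ f ∈ Reg k g, f x₀ ≠ 0 ∧ ∀ x, f x ≠ 0 →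
    Module.finrank k (nulls x : Submodule k g) ≤ Module.finrank k (nulls x₀ : Submodule k g) :=
  exists_reg_finrank_ker_le ((ad_poly (k := k) (g := g)).pow_end (Module.finrank k g)) x₀

lemma adj_ad_pow {u : (Module.End k g)ˣ} (hu : u ∈ adjointGroup k g) (x : g) (m : ℕ) :
    LieAlgebra.ad k g ((u : Module.End k g) x) ^ m * (u : Module.End k g)
      = (u : Module.End k g) * LieAlgebra.ad k g x ^ m := by
  induction m with
  | zero => simp
  | succ m ih => rw [pow_succ', mul_assoc, ih, ← mul_assoc, adj_ad hu, mul_assoc, ← pow_succ']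

lemma adj_mem_nulls {u : (Module.End k g)ˣ} (hu : u ∈ adjointGroup k g) {x y : g} :
    (u : Module.End k g) y ∈ (nulls ((u : Module.End k g) x) : Submodule k g)
      ↔ y ∈ (nulls x : Submodule k g) := by
  rw [nulls, nulls, LinearMap.mem_ker, LinearMap.mem_ker, ← Module.End.mul_apply, adj_ad_pow hu,
    Module.End.mul_apply]
  constructor
  · intro h
    have := congrArg (((u⁻¹ : (Module.End k g)ˣ) : Module.End k g)) h
    rwa [unit_inv_apply, map_zero] at this
  · intro h; rw [h, map_zero]

lemma unit_injective (u : (Module.End k g)ˣ) : Function.Injective (u : Module.End k g) := by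
  intro x y h
  have := congrArg (((u⁻¹ : (Module.End k g)ˣ) : Module.End k g)) h
  rwa [unit_inv_apply, unit_inv_apply] at this

lemma finrank_map_unit (u : (Module.End k g)ˣ) (p : Submodule k g) :
    Module.finrank k (p.map (u : Module.End k g)) = Module.finrank k p :=
  (Submodule.equivMapOfInjective _ (unit_injective u) p).symm.finrank_eq

/-- Translates of a Cartan subalgebra cover a nonempty open set. -/
lemma RD.open_orbit (R : RD t) : ∃ f ∈ Reg k g, f ≠ 0 ∧ ∀ x, f x ≠ 0 →
    ∃ u ∈ adjointGroup k g, nulls x = t.toSubmodule.map (u : Module.End k g) := by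
  classical
  let F : (t × (Fin R.n → k)) → g := fun w => uMap R.e w.2 (w.1 : g)
  have hF : PolyMap k F :=
    ((uList_poly (k := k) R.e Finset.univ.toList).comp
      (PolyMap.linear (LinearMap.snd k t (Fin R.n → k)))).clm_apply
      (PolyMap.linear (t.incl.toLinearMap ∘ₗ LinearMap.fst k t (Fin R.n → k)))
  obtain ⟨DF, hDF, hD⟩ := hF.exists_diff
  obtain ⟨h1, hr, hinj⟩ := R.exists_reg
  have hsurj : Function.Surjective (DF (h1, 0)) := by
    obtain ⟨D, -, hD1, -, hD2, hD3⟩ := uMap_diff R.nil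
    have h2 : ∀ h' b', DF (h1, 0) (h', b') = ⁅∑ i, b' i • R.e i, (h1 : g)⁆ + h' := by
      intro h' b'
      have e1 := (hD1 0 b').apply ((HasExp.line h1 h').linear (t.incl.toLinearMap))
      have e2 := hD _ _ _ (HasExp.line (h1, (0 : Fin R.n → k)) (h', b'))
      have := HasExp.unique e2 (e1.congr (fun s => rfl) rfl rfl)
      rw [this.2, hD2, hD3]; rfl
    intro x
    obtain ⟨h', c, rfl⟩ := R.surj x
    refine ⟨(h', fun i => - (R.root i h1)⁻¹ * c i), ?_⟩
    rw [h2, add_comm, sum_lie]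
    congr 1
    refine Finset.sum_congr rfl fun i _ => ?_
    rw [smul_lie, R.e_lie, smul_smul]
    congr 1
    field_simp [hr i]
  obtain ⟨f, hf0, hf⟩ := chevalley hF (fun f hf => dominant hF hDF
    (fun w w' => hD _ _ _ (HasExp.line w w')) hsurj hf)
  obtain ⟨f', hf', hf'1, hf'2⟩ := reg_nulls (k := k) (h1 : g)
  have hfr : (fun v => evalP k g f v) ∈ Reg k g := evalP_mem f
  refine ⟨_, (Reg k g).mul_mem hfr hf', ?_, ?_⟩
  · intro h0
    rcases Reg_mul_eq_zero hfr hf' (fun z => congrFun h0 z) with h | h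
    · exact hf0 (eq_zero_of_evalP (congrFun h))
    · exact hf'1 (congrFun h _)
  · intro x hx
    obtain ⟨⟨h, b⟩, hx'⟩ := hf x (left_ne_zero_of_mul hx)
    obtain ⟨u, hu, hub⟩ := uMap_mem R.nil b
    have hle := hf'2 x (right_ne_zero_of_mul hx)
    refine ⟨u, hu, ?_⟩
    have hx2 : (u : Module.End k g) (h : g) = x := by rw [hub]; exact hx'
    symm
    refine Submodule.eq_of_le_of_finrank_le ?_ ?_
    · rintro _ ⟨h', hh', rfl⟩
      rw [← hx2, adj_mem_nulls hu, mem_nulls]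
      exact ⟨1, by rw [pow_one]; exact R.ab h ⟨h', hh'⟩⟩
    · rw [finrank_map_unit]
      refine hle.trans ?_
      by_cases hn : Module.finrank k g = 0
      · have := Submodule.finrank_le (nulls (h1 : g) : Submodule k g)
        lia
      · have := R.finrank_ker_pow h1 ∅ (Module.finrank k g) hn (fun i _ => hr i)
        rw [Finset.card_empty, add_zero] at this
        exact this

/-- Conjugacy of Cartan subalgebras. -/
lemma cartan_conj {t' : LieSubalgebra k g} (R : RD t) (R' : RD t') :
    ∃ u ∈ adjointGroup k g, t.toSubmodule = t'.toSubmodule.map (u : Module.End k g) := by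
  obtain ⟨f, hf, hf0, h⟩ := R.open_orbit
  obtain ⟨f', hf', hf'0, h'⟩ := R'.open_orbit
  have : ∃ x, f x * f' x ≠ 0 := by
    by_contra hc
    push Not at hc
    rcases Reg_mul_eq_zero hf hf' hc with h | h
    · exact hf0 h
    · exact hf'0 h
  obtain ⟨x, hx⟩ := this
  obtain ⟨u, hu, h1⟩ := h x (left_ne_zero_of_mul hx)
  obtain ⟨u', hu', h2⟩ := h' x (right_ne_zero_of_mul hx)
  refine ⟨u⁻¹ * u', mul_mem (inv_mem hu) hu', ?_⟩
  rw [Units.val_mul, Module.End.mul_eq_comp, Submodule.map_comp, ← h2, h1, ← Submodule.map_comp,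
    ← Module.End.mul_eq_comp, Units.inv_mul]
  exact (Submodule.map_id _).symm

/-- Every Engel subalgebra contains a Cartan subalgebra. -/
lemma exists_cartan_le (x : g) : ∃ t' : LieSubalgebra k g, t'.IsCartanSubalgebra ∧
    t' ≤ LieSubalgebra.engel k x := by
  classical
  let P : ℕ → Prop := fun m => ∃ z : g, LieSubalgebra.engel k z ≤ LieSubalgebra.engel k x ∧
    Module.finrank k (LieSubalgebra.engel k z) = m
  have hP : ∃ m, P m := ⟨_, x, le_rfl, rfl⟩
  obtain ⟨z, hz, hzm⟩ := Nat.find_spec hP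
  refine ⟨LieSubalgebra.engel k z, ⟨?_, LieSubalgebra.normalizer_engel _ _⟩, hz⟩
  apply LieSubalgebra.isNilpotent_of_forall_le_engel
  intro y hy
  haveI : Infinite k := CharZero.infinite k
  set Ex : {E | ∃ w ∈ LieSubalgebra.engel k z, LieSubalgebra.engel k w = E} :=
    ⟨LieSubalgebra.engel k z, z, LieSubalgebra.self_mem_engel _ _, rfl⟩
  suffices IsBot Ex from @this ⟨LieSubalgebra.engel k y, y, hy, rfl⟩
  apply LieAlgebra.engel_isBot_of_isMin
    (Cardinal.natCast_le_aleph0.trans <| Cardinal.infinite_iff.mp ‹Infinite k›) _ Ex le_rfl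
  rintro ⟨_, y, hy, rfl⟩ hyx
  have hyx' : LieSubalgebra.engel k y ≤ LieSubalgebra.engel k z := hyx
  suffices Module.finrank k (LieSubalgebra.engel k z) ≤ Module.finrank k (LieSubalgebra.engel k y) by
    suffices LieSubalgebra.engel k y = LieSubalgebra.engel k z from this.ge
    apply LieSubalgebra.toSubmodule_injective
    exact Submodule.eq_of_le_of_finrank_le hyx' this
  rw [hzm]
  exact Nat.find_min' hP ⟨y, hyx'.trans hz, rfl⟩

end CV
end P10

section P11
open scoped Topology
set_option linter.unusedSectionVars false
set_option linter.style.haveILetI false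
variable {k : Type*} [Field k] [IsAlgClosed k] [CharZero k]

namespace CV
variable {g : Type*} [LieRing g] [LieAlgebra k g] [FiniteDimensional k g]
variable {t : LieSubalgebra k g}

lemma RD.card_le (R : RD t) (E : Submodule k g) (htE : t.toSubmodule ≤ E) (S : Finset (Fin R.n))
    (hS : ∀ i ∈ S, R.e i ∈ E) : Module.finrank k t + S.card ≤ Module.finrank k E := by
  classical
  let φ : (t × (S → k)) →ₗ[k] g := (R.eqv : (t × (Fin R.n → k)) →ₗ[k] g) ∘ₗ
    LinearMap.prodMap LinearMap.id (Function.ExtendByZero.linearMap k (Subtype.val : S → Fin R.n))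
  have hφ : Function.Injective φ := by
    refine R.eqv.injective.comp ?_
    rintro ⟨h, c⟩ ⟨h', c'⟩ hh
    have h1 : h = h' := congrArg Prod.fst hh
    have h2 : Function.extend (Subtype.val : S → Fin R.n) c 0 = Function.extend Subtype.val c' 0 :=
      congrArg Prod.snd hh
    have h3 : c = c' := by
      funext a
      have := congrFun h2 a
      rwa [Subtype.val_injective.extend_apply, Subtype.val_injective.extend_apply] at this
    rw [h1, h3]
  have hm : ∀ w, φ w ∈ E := by
    rintro ⟨h, c⟩
    change R.eqv (h, Function.extend (Subtype.val : S → Fin R.n) c 0) ∈ E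
    rw [R.eqv_apply]
    refine E.add_mem (htE h.2) (E.sum_mem fun i _ => ?_)
    by_cases hi : i ∈ S
    · exact E.smul_mem _ (hS i hi)
    · rw [Function.extend_apply' _ _ _ (by rintro ⟨a, rfl⟩; exact hi a.2)]
      simp
  have h1 := LinearMap.finrank_le_finrank_of_injective
    (f := LinearMap.codRestrict E φ hm)
    (fun a b hab => hφ (show φ a = φ b from congrArg (Subtype.val : E → g) hab))
  rwa [Module.finrank_prod, Module.finrank_fintype_fun_eq_card, Fintype.card_coe] at h1

lemma RD.two_form (R : RD t) (E : Submodule k g) (htE : t.toSubmodule ≤ E)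
    (hE : ∀ h : t, ∀ x ∈ E, ⁅(h : g), x⁆ ∈ E) (i j : Fin R.n)
    (hS : ∀ l, R.e l ∈ E → l = i ∨ l = j) (v : g) (hv : v ∈ E) :
    ∃ (h : t) (c d : k), v = h + c • R.e i + d • R.e j := by
  classical
  obtain ⟨h, c, rfl⟩ := R.surj v
  have h1 : ∀ l, l ∉ ({i, j} : Finset (Fin R.n)) → c l • R.e l = 0 := by
    intro l hl
    by_contra h0
    have hc : c l ≠ 0 := fun h' => h0 (by rw [h', zero_smul])
    apply hl
    simpa using hS l (R.mem_of_stable E hE h c hv l hc)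
  have h2 : ∑ l, c l • R.e l = ∑ l ∈ ({i, j} : Finset (Fin R.n)), c l • R.e l :=
    (Finset.sum_subset (Finset.subset_univ _) fun l _ hl => h1 l hl).symm
  by_cases hij : i = j
  · subst hij
    exact ⟨h, c i, 0, by rw [h2]; simp⟩
  · exact ⟨h, c i, c j, by rw [h2, Finset.sum_pair hij, add_assoc]⟩

/-- Rank two implies small kernel. -/
lemma finrank_inf_ker_add_two (E : Submodule k g) (A : Module.End k g) (u v : g) (hu : u ∈ E)
    (hv : v ∈ E) (h : ∀ a b : k, a • A u + b • A v = 0 → a = 0 ∧ b = 0) :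
    Module.finrank k (E ⊓ LinearMap.ker A : Submodule k g) + 2 ≤ Module.finrank k E := by
  let φ : ((E ⊓ LinearMap.ker A : Submodule k g) × (k × k)) →ₗ[k] g :=
    LinearMap.coprod (Submodule.subtype _) (LinearMap.coprod (LinearMap.toSpanSingleton k g u)
      (LinearMap.toSpanSingleton k g v))
  have hφa : ∀ z a b, φ (z, (a, b)) = z + (a • u + b • v) := fun z a b => rfl
  have hφ : Function.Injective φ := by
    rw [← LinearMap.ker_eq_bot, LinearMap.ker_eq_bot']
    rintro ⟨z, a, b⟩ h0
    rw [hφa] at h0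
    have h1 := congrArg A h0
    have hz : A z = 0 := z.2.2
    rw [map_add, hz, map_add, map_smul, map_smul, zero_add, map_zero] at h1
    obtain ⟨rfl, rfl⟩ := h a b h1
    have : (z : g) = 0 := by simpa using h0
    have : z = 0 := Subtype.ext this
    rw [this]; rfl
  have hm : ∀ w, φ w ∈ E := by
    rintro ⟨z, a, b⟩
    rw [hφa]
    exact E.add_mem z.2.1 (E.add_mem (E.smul_mem _ hu) (E.smul_mem _ hv))
  have h1 := LinearMap.finrank_le_finrank_of_injective
    (f := LinearMap.codRestrict E φ hm) (fun a b hab => hφ (congrArg Subtype.val hab))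
  rw [Module.finrank_prod, Module.finrank_prod, Module.finrank_self] at h1
  exact h1

lemma RD.indep3 (R : RD t) (i j : Fin R.n) (hij : i ≠ j) (h : t) (c d : k)
    (h0 : (h : g) + c • R.e i + d • R.e j = 0) : h = 0 ∧ c = 0 ∧ d = 0 := by
  classical
  have h1 : (h : g) + ∑ l, (Pi.single i c + Pi.single j d : Fin R.n → k) l • R.e l = 0 := by
    rw [← h0, add_assoc]
    congr 1
    simp only [Pi.add_apply, add_smul, Finset.sum_add_distrib]
    congr 1
    · rw [Finset.sum_eq_single i] <;> simp +contextual [Pi.single_apply]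
    · rw [Finset.sum_eq_single j] <;> simp +contextual [Pi.single_apply]
  obtain ⟨h2, h3⟩ := R.indep _ _ h1
  refine ⟨h2, ?_, ?_⟩
  · simpa [hij] using congrFun h3 i
  · simpa [hij.symm] using congrFun h3 j

lemma RD.sl2_case (R : RD t) (E : Submodule k g) (htE : t.toSubmodule ≤ E)
    (i : Fin R.n) (hi : R.e i ∈ E) (hi' : R.e (R.neg i) ∈ E)
    (hd : Module.finrank k E ≤ Module.finrank k t + 2) (h : t) (c d : k) (p : g)
    (hp : p = h + c • R.e i + d • R.e (R.neg i))
    (hrk : Module.finrank k t < Module.finrank k (E ⊓ cent k p : Submodule k g)) :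
    p ∈ kerRoot k g t (R.root i) := by
  have hne := (R.neg_ne i).symm
  have key : ∀ u v : g, u ∈ E → v ∈ E →
      ¬ (∀ a b : k, a • ⁅p, u⁆ + b • ⁅p, v⁆ = 0 → a = 0 ∧ b = 0) := by
    intro u v hu hv h0
    have := finrank_inf_ker_add_two E (LieAlgebra.ad k g p) u v hu hv h0
    have h3 : Module.finrank k (E ⊓ LinearMap.ker (LieAlgebra.ad k g p) : Submodule k g)
      = Module.finrank k (E ⊓ cent k p : Submodule k g) := rfl
    lia
  have hfe : ⁅R.e (R.neg i), R.e i⁆ = - (R.co i : g) := by rw [← lie_skew, R.lie_neg]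
  have e1 : ⁅p, R.e i⁆ = ((-d • R.co i : t) : g) + R.root i h • R.e i + (0 : k) • R.e (R.neg i) := by
    rw [hp, add_lie, add_lie, R.lie_e, smul_lie, smul_lie, lie_self, hfe]
    push_cast
    module
  have e2 : ⁅p, R.e (R.neg i)⁆
      = ((c • R.co i : t) : g) + (0 : k) • R.e i + (- R.root i h) • R.e (R.neg i) := by
    rw [hp, add_lie, add_lie, R.lie_e, smul_lie, smul_lie, lie_self, R.lie_neg, R.root_neg]
    push_cast
    rw [LinearMap.neg_apply]
    module
  have e3 : ⁅p, (R.co i : g)⁆ = ((0 : t) : g) + (- (c * R.root i (R.co i))) • R.e i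
      + (d * R.root i (R.co i)) • R.e (R.neg i) := by
    rw [hp, add_lie, add_lie, R.ab, smul_lie, smul_lie, R.e_lie, R.e_lie, R.root_neg]
    rw [LinearMap.neg_apply]
    push_cast
    module
  have hco := R.co_ne i
  have hco0 : R.co i ≠ 0 := fun h' => hco (by rw [h', map_zero])
  have hβ : R.root i h = 0 := by
    by_contra hβ
    refine key _ _ hi hi' fun a b hab => ?_
    rw [e1, e2] at hab
    have hab' : ((a • (-d • R.co i) + b • (c • R.co i) : t) : g) + (a * R.root i h) • R.e i
        + (- (b * R.root i h)) • R.e (R.neg i) = 0 := by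
      rw [← hab]; push_cast; module
    obtain ⟨-, h2, h3⟩ := R.indep3 _ _ hne _ _ _ hab'
    exact ⟨by simpa [hβ] using h2, by simpa [hβ] using h3⟩
  have hcE : (R.co i : g) ∈ E := htE (R.co i).2
  have hc : c = 0 := by
    by_contra hc
    refine key _ _ hi' hcE fun a b hab => ?_
    rw [e2, e3] at hab
    have hab' : ((a • (c • R.co i) : t) : g) + (- (b * (c * R.root i (R.co i)))) • R.e i
        + (- (a * R.root i h) + b * (d * R.root i (R.co i))) • R.e (R.neg i) = 0 := by
      rw [← hab]; push_cast; module
    obtain ⟨h1, h2, -⟩ := R.indep3 _ _ hne _ _ _ hab'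
    exact ⟨by simpa [hc, hco0] using h1, by simpa [hc, hco] using h2⟩
  have hd0 : d = 0 := by
    by_contra hd0
    refine key _ _ hi hcE fun a b hab => ?_
    rw [e1, e3] at hab
    have hab' : ((a • (-d • R.co i) : t) : g)
        + (a * R.root i h - (b * (c * R.root i (R.co i)))) • R.e i
        + (b * (d * R.root i (R.co i))) • R.e (R.neg i) = 0 := by
      rw [← hab]; push_cast; module
    obtain ⟨h1, -, h2⟩ := R.indep3 _ _ hne _ _ _ hab'
    exact ⟨by simpa [hd0, hco0] using h1, by simpa [hd0, hco] using h2⟩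
  refine ⟨h, hβ, ?_⟩
  rw [hp, hc, hd0]
  simp

lemma RD.irr_aux (R : RD t) (x y : g) (hxy : ⁅x, y⁆ = 0) (htx : t.toSubmodule ≤ nulls x)
    (hd : Module.finrank k (nulls x : Submodule k g) ≤ Module.finrank k t + 2)
    (hirr : Module.finrank k t < Module.finrank k (cent k x ⊓ cent k y : Submodule k g)) :
    ∃ i, x ∈ kerRoot k g t (R.root i) ∧ y ∈ kerRoot k g t (R.root i) := by
  classical
  set E : Submodule k g := nulls x with hEdef
  have hlie : ∀ a b, a ∈ E → b ∈ E → ⁅a, b⁆ ∈ E := by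
    intro a b
    rw [hEdef, ← engel_eq_nulls]
    exact (LieSubalgebra.engel k x).lie_mem
  have hst : ∀ h : t, ∀ z ∈ E, ⁅(h : g), z⁆ ∈ E := fun h z hz => hlie _ _ (htx h.2) hz
  have hcx : cent k x ≤ E := by
    intro z hz
    exact mem_nulls.mpr ⟨1, by rw [pow_one]; exact hz⟩
  have hxE : x ∈ E := hcx (by change ⁅x, x⁆ = 0; exact lie_self x)
  have hyE : y ∈ E := hcx hxy
  have heig : ∀ z ∈ E, ∀ a : k, z ≠ 0 → ⁅x, z⁆ = a • z → a = 0 := by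
    intro z hz a hz0 ha
    obtain ⟨m, hm⟩ := mem_nulls.mp hz
    have : ∀ m : ℕ, (LieAlgebra.ad k g x ^ m) z = a ^ m • z := by
      intro m
      induction m with
      | zero => simp
      | succ m ih =>
        rw [pow_succ', Module.End.mul_apply, ih, map_smul, LieAlgebra.ad_apply, ha, smul_smul,
          pow_succ]
    rw [this] at hm
    exact eq_zero_of_pow_eq_zero ((smul_eq_zero.mp hm).resolve_right hz0)
  let S : Finset (Fin R.n) := Finset.univ.filter fun i => R.e i ∈ E
  have hSm : ∀ i, i ∈ S ↔ R.e i ∈ E := fun i => by simp [S]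
  have hScard : S.card ≤ 2 := by
    have := R.card_le E htx S (fun i hi => (hSm i).mp hi)
    lia
  have hSne : S.Nonempty := by
    rw [Finset.nonempty_iff_ne_empty]
    intro h0
    have h1 : E ≤ t.toSubmodule := by
      intro v hv
      obtain ⟨h, c, rfl⟩ := R.surj v
      have : c = 0 := by
        funext i
        by_contra hi
        have := (hSm i).mpr (R.mem_of_stable E hst h c hv i hi)
        rw [h0] at this
        simp at this
      rw [this]; simp
    have h2 := Submodule.finrank_mono ((inf_le_left.trans hcx).trans h1 :
      cent k x ⊓ cent k y ≤ t.toSubmodule)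
    exact absurd hirr (not_lt.mpr h2)
  obtain ⟨i, hi⟩ := hSne
  have hiE := (hSm i).mp hi
  by_cases hneg : R.e (R.neg i) ∈ E
  · have hS2 : ∀ l, R.e l ∈ E → l = i ∨ l = R.neg i := by
      intro l hl
      by_contra hc
      push Not at hc
      have h3 : ({i, R.neg i, l} : Finset (Fin R.n)) ⊆ S := by
        intro a ha
        simp only [Finset.mem_insert, Finset.mem_singleton] at ha
        rcases ha with rfl | rfl | rfl
        · exact hi
        · exact (hSm _).mpr hneg
        · exact (hSm _).mpr hl
      have h4 := Finset.card_le_card h3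
      rw [Finset.card_eq_three.mpr ⟨i, R.neg i, l, (R.neg_ne i).symm, hc.1.symm, hc.2.symm, rfl⟩] at h4
      lia
    refine ⟨i, ?_, ?_⟩
    · obtain ⟨h, c, d, hx⟩ := R.two_form E htx hst i (R.neg i) hS2 x hxE
      refine R.sl2_case E htx i hiE hneg hd h c d x hx (hirr.trans_le ?_)
      exact Submodule.finrank_mono (le_inf (inf_le_left.trans hcx) inf_le_left)
    · obtain ⟨h, c, d, hy⟩ := R.two_form E htx hst i (R.neg i) hS2 y hyE
      refine R.sl2_case E htx i hiE hneg hd h c d y hy (hirr.trans_le ?_)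
      exact Submodule.finrank_mono (le_inf (inf_le_left.trans hcx) inf_le_right)
  · exfalso
    obtain ⟨j, hj, hS2⟩ : ∃ j ∈ S, ∀ l, R.e l ∈ E → l = i ∨ l = j := by
      by_cases h1 : ∃ j ∈ S, j ≠ i
      · obtain ⟨j, hj, hji⟩ := h1
        refine ⟨j, hj, fun l hl => ?_⟩
        by_contra hc
        push Not at hc
        have h3 : ({i, j, l} : Finset (Fin R.n)) ⊆ S := by
          intro a ha
          simp only [Finset.mem_insert, Finset.mem_singleton] at ha
          rcases ha with rfl | rfl | rfl
          · exact hi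
          · exact hj
          · exact (hSm _).mpr hl
        have h4 := Finset.card_le_card h3
        rw [Finset.card_eq_three.mpr ⟨i, j, l, hji.symm, hc.1.symm, hc.2.symm, rfl⟩] at h4
        lia
      · push Not at h1
        exact ⟨i, hi, fun l hl => Or.inl (h1 l ((hSm l).mpr hl))⟩
    have hjE := (hSm j).mp hj
    have hij : ⁅R.e i, R.e j⁆ = 0 := by
      by_contra h0
      have hγ : R.root i + R.root j ≠ 0 := by
        intro h'
        have : R.root j = R.root (R.neg i) := by
          rw [R.root_neg]; exact eq_neg_of_add_eq_zero_right h'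
        rw [R.root_inj this] at hjE
        exact hneg hjE
      obtain ⟨l, hl, c, hc⟩ := R.wt _ hγ _ h0 (by
        intro h
        rw [leibniz_lie, R.lie_e, R.lie_e, smul_lie, lie_smul, LinearMap.add_apply, add_smul])
      have hlE : R.e l ∈ E := by
        have h5 := hlie _ _ hiE hjE
        have hc0 : c ≠ 0 := by rintro rfl; exact h0 (by rw [hc, zero_smul])
        rw [hc] at h5
        have := E.smul_mem c⁻¹ h5
        rwa [smul_smul, inv_mul_cancel₀ hc0, one_smul] at this
      rcases hS2 l hlE with rfl | rfl
      · exact R.root_ne j (by simpa using hl)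
      · exact R.root_ne i (by simpa using hl)
    have hji : ⁅R.e j, R.e i⁆ = 0 := by rw [← lie_skew, hij, neg_zero]
    obtain ⟨h, c, d, hx⟩ := R.two_form E htx hst i j hS2 x hxE
    have hri : R.root i h = 0 := heig _ hiE _ (R.e_ne i) (by
      rw [hx, add_lie, add_lie, R.lie_e, smul_lie, smul_lie, hji, lie_self]; simp)
    have hrj : R.root j h = 0 := heig _ hjE _ (R.e_ne j) (by
      rw [hx, add_lie, add_lie, R.lie_e, smul_lie, smul_lie, hij, lie_self]; simp)
    apply hneg
    set n : g := c • R.e i + d • R.e j with hn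
    have hadc : ∀ a b : g, ⁅a, b⁆ = 0 → Commute (LieAlgebra.ad k g a) (LieAlgebra.ad k g b) := by
      intro a b hab
      change _ = _
      ext z
      simp only [Module.End.mul_apply, LieAlgebra.ad_apply]
      rw [leibniz_lie, hab, zero_lie, zero_add]
    have hnn : IsNilpotent (LieAlgebra.ad k g n) := by
      rw [hn, map_add]
      refine Commute.isNilpotent_add (hadc _ _ ?_) ?_ ?_
      · rw [smul_lie, lie_smul, hij, smul_zero, smul_zero]
      · rw [map_smul]; exact (R.nil i).smul c
      · rw [map_smul]; exact (R.nil j).smul d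
    have hhn : Commute (LieAlgebra.ad k g (h : g)) (LieAlgebra.ad k g n) := by
      apply hadc
      rw [hn, lie_add, lie_smul, lie_smul, R.lie_e, R.lie_e, hri, hrj]
      simp
    have hkill : LieAlgebra.ad k g (h : g) (R.e (R.neg i)) = 0 := by
      rw [LieAlgebra.ad_apply, R.lie_e, R.root_neg, LinearMap.neg_apply, hri]; simp
    obtain ⟨m, hm⟩ := hnn
    refine mem_nulls.mpr ⟨m, ?_⟩
    have hxn : LieAlgebra.ad k g x = LieAlgebra.ad k g (h : g) + LieAlgebra.ad k g n := by
      rw [hx, hn, ← map_add, add_assoc]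
    have hpow : ∀ m : ℕ, (LieAlgebra.ad k g x ^ m) (R.e (R.neg i))
        = (LieAlgebra.ad k g n ^ m) (R.e (R.neg i)) := by
      intro m
      induction m with
      | zero => rfl
      | succ m ih =>
        rw [pow_succ', Module.End.mul_apply, ih, hxn, LinearMap.add_apply, ← Module.End.mul_apply,
          (hhn.pow_right m).eq, Module.End.mul_apply, hkill, map_zero, zero_add,
          ← Module.End.mul_apply, ← pow_succ']
    rw [hpow, hm]; rfl

lemma irr_mem (hred : LieAlgebra.radical k g = LieAlgebra.center k g) (R : RD t) (z : g × g)
    (hz : z ∈ Cirr k g t)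
    (hd : Module.finrank k (nulls z.1 : Submodule k g) ≤ Module.finrank k t + 2) :
    ∃ i, z ∈ adTranslates k g ((↑(kerRoot k g t (R.root i)) : Set g) ×ˢ
      (↑(kerRoot k g t (R.root i)) : Set g)) := by
  obtain ⟨x, y⟩ := z
  obtain ⟨hc, hirr⟩ := hz
  simp only at hc hirr hd
  have hc : ⁅x, y⁆ = 0 := hc
  obtain ⟨t', ht', hle⟩ := exists_cartan_le (k := k) x
  obtain ⟨R'⟩ := reductive_RD hred t' ht'
  obtain ⟨u, hu, hut⟩ := cartan_conj R R'
  have hmapn : nulls ((u : Module.End k g) x) = (nulls x : Submodule k g).map (u : Module.End k g) := by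
    apply le_antisymm
    · intro v hv
      refine ⟨((u⁻¹ : (Module.End k g)ˣ) : Module.End k g) v, ?_, unit_apply_inv u v⟩
      have : (u : Module.End k g) (((u⁻¹ : (Module.End k g)ˣ) : Module.End k g) v)
        ∈ (nulls ((u : Module.End k g) x) : Submodule k g) := by rwa [unit_apply_inv]
      exact (adj_mem_nulls hu).mp this
    · rintro _ ⟨v, hv, rfl⟩
      exact (adj_mem_nulls hu).mpr hv
  have hcent : (cent k x ⊓ cent k y).map (u : Module.End k g)
      ≤ cent k ((u : Module.End k g) x) ⊓ cent k ((u : Module.End k g) y) := by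
    rintro _ ⟨v, ⟨h1, h2⟩, rfl⟩
    have h1 : ⁅x, v⁆ = 0 := h1
    have h2 : ⁅y, v⁆ = 0 := h2
    refine ⟨?_, ?_⟩
    · change ⁅(u : Module.End k g) x, (u : Module.End k g) v⁆ = 0
      rw [← adj_lie hu, h1, map_zero]
    · change ⁅(u : Module.End k g) y, (u : Module.End k g) v⁆ = 0
      rw [← adj_lie hu, h2, map_zero]
  obtain ⟨i, h1, h2⟩ := R.irr_aux ((u : Module.End k g) x) ((u : Module.End k g) y)
    (by rw [← adj_lie hu, hc, map_zero])
    (by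
      rw [hmapn, hut]
      refine Submodule.map_mono ?_
      rw [← engel_eq_nulls]; exact hle)
    (by rw [hmapn, finrank_map_unit]; exact hd)
    (hirr.trans_le (by
      rw [← finrank_map_unit u]
      exact Submodule.finrank_mono hcent))
  refine ⟨i, u⁻¹, inv_mem hu, (_, _), ⟨h1, h2⟩, ?_⟩
  simp only [unit_inv_apply]

end CV
end P11

section P12
open scoped Topology
set_option linter.unusedSectionVars false
set_option linter.style.haveILetI false
variable {k : Type*} [Field k] [IsAlgClosed k] [CharZero k]

namespace CV
variable {g : Type*} [LieRing g] [LieAlgebra k g] [FiniteDimensional k g]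
variable {t : LieSubalgebra k g}

/-- The roots different from plus or minus the given one. -/
def RD.J (R : RD t) (i : Fin R.n) : Finset (Fin R.n) :=
  (Finset.univ.erase i).erase (R.neg i)

lemma RD.mem_J (R : RD t) (i j : Fin R.n) : j ∈ R.J i ↔ j ≠ R.neg i ∧ j ≠ i := by
  simp [RD.J]

lemma RD.card_J (R : RD t) (i : Fin R.n) : (R.J i).card + 2 = R.n := by
  have h1 : R.neg i ∈ Finset.univ.erase i := by simp [R.neg_ne i]
  have h2 := Finset.card_erase_add_one h1
  have h3 := Finset.card_erase_add_one (Finset.mem_univ i)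
  rw [Finset.card_univ, Fintype.card_fin] at h3
  rw [RD.J]; lia

/-- The kernel of a root, as a subspace of `g`. -/
abbrev RD.K (R : RD t) (i : Fin R.n) : Submodule k g := kerRoot k g t (R.root i)

lemma RD.finrank_K (R : RD t) (i : Fin R.n) :
    Module.finrank k (R.K i) + 1 = Module.finrank k t := by
  have h1 : Module.finrank k (R.K i) = Module.finrank k (LinearMap.ker (R.root i)) :=
    (Submodule.equivMapOfInjective t.incl.toLinearMap Subtype.val_injective _).symm.finrank_eq
  rw [h1, Module.Dual.finrank_ker_add_one_of_ne_zero (R.root_ne i)]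

/-- The parameter space. -/
abbrev RD.W (R : RD t) (i : Fin R.n) : Type _ := ((R.J i) → k) × ((R.K i) × (R.K i))

lemma RD.finrank_W (R : RD t) (i : Fin R.n) :
    Module.finrank k (R.W i) + 4 = Module.finrank k g + Module.finrank k t := by
  have h1 := R.finrank_K i
  have h2 := R.card_J i
  have h3 := R.finrank_eq
  rw [Module.finrank_prod, Module.finrank_prod, Module.finrank_fintype_fun_eq_card,
    Fintype.card_coe]
  lia

/-- The root vectors with index in `J`. -/
def RD.eJ (R : RD t) (i : Fin R.n) : R.J i → g := fun j => R.e j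

lemma RD.nilJ (R : RD t) (i : Fin R.n) (j : R.J i) : IsNilpotent (LieAlgebra.ad k g (R.eJ i j)) :=
  R.nil j

/-- The parametrization. -/
def RD.Phi (R : RD t) (i : Fin R.n) (w : R.W i) : g × g :=
  (uMap (R.eJ i) w.1 (w.2.1 : g), uMap (R.eJ i) w.1 (w.2.2 : g))

lemma RD.Phi_poly (R : RD t) (i : Fin R.n) : PolyMap k (R.Phi i) := by
  have h1 : PolyMap k (fun w : R.W i => uMap (R.eJ i) w.1) :=
    (uList_poly (k := k) (R.eJ i) Finset.univ.toList).comp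
      (PolyMap.linear (LinearMap.fst k (R.J i → k) ((R.K i) × (R.K i))))
  refine PolyMap.prodMk (h1.clm_apply (PolyMap.linear ((R.K i).subtype ∘ₗ LinearMap.fst k _ _ ∘ₗ
    LinearMap.snd k (R.J i → k) ((R.K i) × (R.K i)))))
    (h1.clm_apply (PolyMap.linear ((R.K i).subtype ∘ₗ LinearMap.snd k _ _ ∘ₗ
    LinearMap.snd k (R.J i → k) ((R.K i) × (R.K i)))))

lemma RD.lie_K (R : RD t) (i : Fin R.n) (a : g) : ∃ b : R.J i → k, ∀ z ∈ R.K i,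
    ⁅a, z⁆ = ⁅∑ j, b j • R.eJ i j, z⁆ := by
  classical
  obtain ⟨h, c, rfl⟩ := R.surj a
  refine ⟨fun j => c j, ?_⟩
  rintro _ ⟨z, hz, rfl⟩
  have hz : R.root i z = 0 := hz
  change ⁅_, (z : g)⁆ = ⁅_, (z : g)⁆
  have h1 : ∑ j : R.J i, c j • R.eJ i j = ∑ j ∈ R.J i, c j • R.e j :=
    Finset.sum_coe_sort (R.J i) (fun j => c j • R.e j)
  rw [h1, add_lie, R.ab, zero_add, sum_lie, sum_lie]
  symm
  refine Finset.sum_subset (Finset.subset_univ _) fun j _ hj => ?_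
  have h2 : R.root j z = 0 := by
    rw [R.mem_J] at hj
    by_cases h' : j = i
    · rw [h', hz]
    · have : j = R.neg i := by
        by_contra h''; exact hj ⟨h'', h'⟩
      rw [this, R.root_neg, LinearMap.neg_apply, hz, neg_zero]
  rw [smul_lie, R.e_lie, h2]; simp

/-- Main facts about the parametrization. -/
lemma RD.Phi_diff (R : RD t) (i : Fin R.n) :
    ∃ DΦ : R.W i → (R.W i →ₗ[k] g × g), PolyMap k DΦ ∧
      (∀ w w', HasExp (fun s : k => R.Phi i (w + s • w')) (R.Phi i w) (DΦ w w')) ∧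
      (∃ w₀, Function.Injective (DΦ w₀)) ∧
      (∀ w, Function.Injective (DΦ w) → ∀ x : g,
        ∃ w', DΦ w w' = (⁅x, (R.Phi i w).1⁆, ⁅x, (R.Phi i w).2⁆)) := by
  classical
  obtain ⟨DΦ, hDΦ, hD⟩ := (R.Phi_poly i).exists_diff
  obtain ⟨D, -, hD1, hDa, hD0, hu0⟩ := uMap_diff (R.nilJ i)
  have hval : ∀ (w w' : R.W i), DΦ w w' =
      (D w.1 w'.1 w.2.1 + uMap (R.eJ i) w.1 w'.2.1, D w.1 w'.1 w.2.2 + uMap (R.eJ i) w.1 w'.2.2) := by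
    rintro ⟨b, c, d⟩ ⟨b', c', d'⟩
    have e1 := (hD1 b b').apply ((HasExp.line c c').linear ((R.K i).subtype))
    have e2 := (hD1 b b').apply ((HasExp.line d d').linear ((R.K i).subtype))
    have e3 := hD _ _ _ (HasExp.line ((b, c, d) : R.W i) (b', c', d'))
    exact (HasExp.unique e3 ((e1.prodMk e2).congr (fun s => rfl) rfl rfl)).2
  refine ⟨DΦ, hDΦ, fun w w' => hD _ _ _ (HasExp.line w w'), ?_, ?_⟩
  · obtain ⟨c0, hc0, hc1⟩ := R.exists_ker i
    let c : R.K i := ⟨(c0 : g), c0, hc0, rfl⟩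
    refine ⟨(0, c, c), ?_⟩
    rw [← LinearMap.ker_eq_bot, LinearMap.ker_eq_bot']
    rintro ⟨b', c', d'⟩ h0
    rw [hval] at h0
    simp only [hD0, hu0] at h0
    have h1 : ⁅∑ j, b' j • R.eJ i j, (c0 : g)⁆ + (c' : g) = 0 := congrArg Prod.fst h0
    have h2 : ⁅∑ j, b' j • R.eJ i j, (c0 : g)⁆ + (d' : g) = 0 := congrArg Prod.snd h0
    obtain ⟨c1, hc1', hc2⟩ := c'.2
    let β : Fin R.n → k := fun j => if hj : j ∈ R.J i then b' ⟨j, hj⟩ * - R.root j c0 else 0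
    have h3 : ⁅∑ j, b' j • R.eJ i j, (c0 : g)⁆ = ∑ j, β j • R.e j := by
      have h31 : ∑ j, β j • R.e j = ∑ j ∈ R.J i, β j • R.e j :=
        (Finset.sum_subset (Finset.subset_univ _) fun j _ hj => by simp [β, hj]).symm
      rw [h31, sum_lie, ← Finset.sum_coe_sort (R.J i) (fun j => β j • R.e j)]
      refine Finset.sum_congr rfl fun j _ => ?_
      rw [smul_lie, RD.eJ, R.e_lie, smul_smul]
      simp [β]
    have h4 : (c1 : g) + ∑ j, β j • R.e j = 0 := by
      rw [← h3, ← h1, add_comm]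
      congr 1
    obtain ⟨h5, h6⟩ := R.indep _ _ h4
    have hb : b' = 0 := by
      funext j
      have := congrFun h6 j
      simp only [β, j.2, dif_pos, Pi.zero_apply] at this
      have hj := (R.mem_J i j).mp j.2
      exact (mul_eq_zero.mp this).resolve_right (neg_ne_zero.mpr (hc1 j hj.2 hj.1))
    subst hb
    have h7 : c' = 0 := Subtype.ext (by simpa using h1)
    have h8 : d' = 0 := Subtype.ext (by simpa using h2)
    rw [h7, h8]; rfl
  · rintro ⟨b, c, d⟩ hinj x
    obtain ⟨u, hu, hub⟩ := uMap_mem (R.nilJ i) b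
    let L : R.K i → ((R.W i) →ₗ[k] g) := fun z =>
      -(LieAlgebra.ad k g (z : g)) ∘ₗ Fintype.linearCombination k (R.eJ i) ∘ₗ
        LinearMap.fst k (R.J i → k) ((R.K i) × (R.K i))
    have hL : ∀ z (w : R.W i), L z w = ⁅∑ j, w.1 j • R.eJ i j, (z : g)⁆ := by
      intro z w
      change - ⁅(z : g), Fintype.linearCombination k (R.eJ i) w.1⁆ = _
      rw [Fintype.linearCombination_apply, lie_skew]
    let Ψ : (R.W i) →ₗ[k] g × g := LinearMap.prod
      ((u : Module.End k g) ∘ₗ (L c + (R.K i).subtype ∘ₗ LinearMap.fst k _ _ ∘ₗ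
        LinearMap.snd k (R.J i → k) ((R.K i) × (R.K i))))
      ((u : Module.End k g) ∘ₗ (L d + (R.K i).subtype ∘ₗ LinearMap.snd k _ _ ∘ₗ
        LinearMap.snd k (R.J i → k) ((R.K i) × (R.K i))))
    have hΨ : ∀ w : R.W i, Ψ w = ((u : Module.End k g) (⁅∑ j, w.1 j • R.eJ i j, (c : g)⁆ + w.2.1),
        (u : Module.End k g) (⁅∑ j, w.1 j • R.eJ i j, (d : g)⁆ + w.2.2)) := by
      intro w
      rw [← hL, ← hL]; rfl
    have hle : LinearMap.range (DΦ (b, c, d)) ≤ LinearMap.range Ψ := by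
      rintro _ ⟨⟨b', c', d'⟩, rfl⟩
      obtain ⟨a, ha⟩ := hDa b b'
      obtain ⟨b'', hb''⟩ := R.lie_K i a
      refine ⟨(b'', c', d'), ?_⟩
      rw [hΨ, hval]
      simp only [ha, ← hub, Module.End.mul_apply, LieAlgebra.ad_apply, map_add]
      rw [hb'' _ c.2, hb'' _ d.2]
    have hfr : Module.finrank k (LinearMap.range Ψ) ≤
        Module.finrank k (LinearMap.range (DΦ (b, c, d))) := by
      rw [LinearMap.finrank_range_of_inj hinj]
      exact LinearMap.finrank_range_le Ψ
    have heq := Submodule.eq_of_le_of_finrank_le hle hfr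
    have hmem : ((⁅x, (R.Phi i (b, c, d)).1⁆, ⁅x, (R.Phi i (b, c, d)).2⁆) : g × g)
        ∈ LinearMap.range Ψ := by
      obtain ⟨b'', hb''⟩ := R.lie_K i (((u⁻¹ : (Module.End k g)ˣ) : Module.End k g) x)
      refine ⟨(b'', 0, 0), ?_⟩
      rw [hΨ]
      have key : ∀ z : R.K i, (u : Module.End k g) (⁅∑ j, b'' j • R.eJ i j, (z : g)⁆ +
          ((0 : R.K i) : g)) = ⁅x, uMap (R.eJ i) b (z : g)⁆ := by
        intro z
        rw [← hb'' _ z.2, Submodule.coe_zero, add_zero, adj_lie hu, unit_apply_inv, hub]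
      exact Prod.ext (key c) (key d)
    rw [← heq] at hmem
    exact hmem

/-- Stability of the closure under the adjoint group. -/
lemma RD.stable (R : RD t) (i : Fin R.n) {u : (Module.End k g)ˣ} (hu : u ∈ adjointGroup k g)
    (p : g × g) (hp : p ∈ @closure _ (zar k (g × g)) (Set.range (R.Phi i))) :
    (((u : Module.End k g) p.1, (u : Module.End k g) p.2) : g × g)
      ∈ @closure _ (zar k (g × g)) (Set.range (R.Phi i)) := by
  obtain ⟨DΦ, hDΦ, hexp, ⟨w₀, hw₀⟩, htan⟩ := R.Phi_diff i
  obtain ⟨q, hq, hq0, hqi⟩ := inj_generic hDΦ w₀ hw₀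
  have hgen : ∀ x : g, IsNilpotent (LieAlgebra.ad k g x) → ∀ p : g × g,
      p ∈ @closure _ (zar k (g × g)) (Set.range (R.Phi i)) →
      ((expEnd k g (LieAlgebra.ad k g x) p.1, expEnd k g (LieAlgebra.ad k g x) p.2) : g × g)
      ∈ @closure _ (zar k (g × g)) (Set.range (R.Phi i)) := by
    intro x hx p hp
    rw [mem_closure_zar] at hp ⊢
    rintro _ ⟨f, rfl⟩ hf
    let A : (g × g) →ₗ[k] g × g := LinearMap.prodMap (LieAlgebra.ad k g x) (LieAlgebra.ad k g x)
    let Γ : k → g × g := fun s => (expEnd k g (s • LieAlgebra.ad k g x) p.1,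
      expEnd k g (s • LieAlgebra.ad k g x) p.2)
    have hE : PolyMap k (fun s : k => expEnd k g (s • LieAlgebra.ad k g x)) :=
      expEnd_poly (PolyMap.id.smul (PolyMap.const _))
    have hΓ : PolyMap k Γ :=
      (hE.clm_apply (PolyMap.const p.1)).prodMk (hE.clm_apply (PolyMap.const p.2))
    have hcomm : ∀ s : k, ∀ z : g, expEnd k g (s • LieAlgebra.ad k g x) ⁅x, z⁆
        = ⁅x, expEnd k g (s • LieAlgebra.ad k g x) z⁆ := by
      intro s z
      have : Commute (expEnd k g (s • LieAlgebra.ad k g x)) (LieAlgebra.ad k g x) := by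
        unfold expEnd
        refine Commute.sum_left _ _ _ fun j _ => ?_
        exact (((Commute.refl _).smul_left s).pow_left j).smul_left _
      exact LinearMap.congr_fun this z
    have := flow_zero (V := g × g) A Γ hΓ ?_ {f | ∀ w, evalP k (g × g) f (R.Phi i w) = 0} ?_ ?_
      (f := f) (fun w => hf _ ⟨w, rfl⟩) 1
    · have h1 : evalP k (g × g) f (Γ 1) = 0 := this
      simp only [Γ, one_smul] at h1
      exact h1
    · intro s
      have e0 : ∀ z : g, HasExp (fun s' : k => expEnd k g ((s + s') • LieAlgebra.ad k g x) z)
          (expEnd k g (s • LieAlgebra.ad k g x) z) ⁅x, expEnd k g (s • LieAlgebra.ad k g x) z⁆ := by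
        intro z
        refine ((expEnd_hasExp' hx s 1).apply (HasExp.const z)).congr (fun s' => ?_) rfl ?_
        · rw [mul_one]
        · rw [← hcomm]; simp
      exact (e0 p.1).prodMk (e0 p.2)
    · intro f hf
      obtain ⟨f', hf'⟩ := exists_vf (fun z => A z) (PolyMap.linear A) f
      refine ⟨f', ?_, hf'⟩
      intro w
      refine Reg_eq_zero_of_generic hq ((R.Phi_poly i).reg_comp (evalP_mem f')) hq0
        (fun w hw => ?_) w
      obtain ⟨w', hw'⟩ := htan w (hqi w hw) x
      have h1 := (hexp w w').evalP f
      have h2 : (fun s => evalP k (g × g) f (R.Phi i (w + s • w'))) = fun _ : k => 0 := by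
        funext s; exact hf _
      rw [h2] at h1
      rw [hf', ← (HasExp.unique h1 (HasExp.const 0)).2, hw']
      rfl
    · intro f hf
      have h0 : Γ 0 = p := by simp [Γ, expEnd_zero]
      rw [h0]
      refine hp _ ⟨f, rfl⟩ ?_
      rintro _ ⟨w, rfl⟩
      exact hf w
  have hboth : ∀ p, p ∈ @closure _ (zar k (g × g)) (Set.range (R.Phi i)) →
      (((u : Module.End k g) p.1, (u : Module.End k g) p.2) : g × g)
        ∈ @closure _ (zar k (g × g)) (Set.range (R.Phi i)) ∧
      ((((u⁻¹ : (Module.End k g)ˣ) : Module.End k g) p.1,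
        ((u⁻¹ : (Module.End k g)ˣ) : Module.End k g) p.2) : g × g)
        ∈ @closure _ (zar k (g × g)) (Set.range (R.Phi i)) := by
    clear hp p
    induction hu using Subgroup.closure_induction with
    | mem u hu =>
      obtain ⟨x, hx, hux⟩ := hu
      intro p hp
      refine ⟨by rw [hux]; exact hgen x hx p hp, ?_⟩
      have hu' : u = expU x hx := Units.ext hux
      have hneg : ((u⁻¹ : (Module.End k g)ˣ) : Module.End k g)
          = expEnd k g (LieAlgebra.ad k g (-x)) := by
        rw [hu', map_neg]; rfl
      rw [hneg]
      exact hgen (-x) (by rw [map_neg]; exact hx.neg) p hp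
    | one => intro p hp; rw [inv_one]; exact ⟨hp, hp⟩
    | mul u v _ _ ihu ihv =>
      intro p hp
      rw [mul_inv_rev]
      exact ⟨(ihu _ (ihv p hp).1).1, (ihv _ (ihu p hp).2).2⟩
    | inv u _ ih =>
      intro p hp
      rw [inv_inv]
      exact ⟨(ih p hp).2, (ih p hp).1⟩
  exact (hboth p hp).1

lemma RD.closure_eq (R : RD t) (i : Fin R.n) :
    @closure _ (zar k (g × g)) (adTranslates k g ((↑(kerRoot k g t (R.root i)) : Set g) ×ˢ
      (↑(kerRoot k g t (R.root i)) : Set g))) = @closure _ (zar k (g × g)) (Set.range (R.Phi i)) := by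
  letI := zar k (g × g)
  apply subset_antisymm
  · refine closure_minimal ?_ isClosed_closure
    rintro _ ⟨u, hu, ⟨c, d⟩, ⟨hc, hd⟩, rfl⟩
    refine R.stable i hu (c, d) (subset_closure ⟨(0, ⟨c, hc⟩, ⟨d, hd⟩), ?_⟩)
    obtain ⟨D, -, hD1, hDa, hD0, hu0⟩ := uMap_diff (R.nilJ i)
    simp only [RD.Phi, hu0]; rfl
  · refine closure_mono ?_
    rintro _ ⟨⟨b, c, d⟩, rfl⟩
    obtain ⟨u, hu, hub⟩ := uMap_mem (R.nilJ i) b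
    exact ⟨u, hu, (c, d), ⟨c.2, d.2⟩, by rw [hub]; rfl⟩

lemma RD.closure_dim (R : RD t) (i : Fin R.n) :
    dimSet k (g × g) (@closure _ (zar k (g × g)) (Set.range (R.Phi i)))
      = ((Module.finrank k (R.W i) : ℕ) : WithBot ℕ∞) := by
  obtain ⟨DΦ, hDΦ, hexp, ⟨w₀, hw₀⟩, htan⟩ := R.Phi_diff i
  exact dim_closure_range (R.Phi_poly i) hDΦ hexp hw₀

lemma RD.closure_irr (R : RD t) (i : Fin R.n) :
    @IsIrreducible _ (zar k (g × g)) (@closure _ (zar k (g × g)) (Set.range (R.Phi i))) := by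
  letI := zar k (g × g)
  exact (R.Phi_poly i).isIrreducible_range.closure

end CV
end P12

section P13
open scoped Topology
set_option linter.unusedSectionVars false
set_option linter.style.haveILetI false
variable {k : Type*} [Field k] [IsAlgClosed k] [CharZero k]

namespace CV
variable {g : Type*} [LieRing g] [LieAlgebra k g] [FiniteDimensional k g]
variable {t : LieSubalgebra k g}

lemma isClosed_commSet : IsClosed[zar k (g × g)] (commSet k g) := by
  letI := zar k (g × g)
  have hp : PolyMap k (fun z : g × g => ⁅z.1, z.2⁆) :=
    PolyMap.bilin (LieAlgebra.ad k g : g →ₗ[k] Module.End k g)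
      (PolyMap.linear (LinearMap.fst k g g)) (PolyMap.linear (LinearMap.snd k g g))
  have h : commSet k g = ⋂ φ : Module.Dual k g, {z : g × g | φ ⁅z.1, z.2⁆ = 0} := by
    ext z
    simp only [Set.mem_iInter, Set.mem_setOf_eq, commSet]
    exact (Module.forall_dual_apply_eq_zero_iff k _).symm
  rw [h]
  exact isClosed_iInter fun φ => isClosed_eq_zero (hp φ)

lemma isClosed_Cirr : IsClosed[zar k (g × g)] (Cirr k g t) := by
  letI := zar k (g × g)
  let A : (g × g) →ₗ[k] (g →ₗ[k] g × g) :=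
    (LinearMap.prodEquiv k : ((g →ₗ[k] g) × (g →ₗ[k] g)) ≃ₗ[k] _).toLinearMap ∘ₗ
      LinearMap.prodMap (LieAlgebra.ad k g : g →ₗ[k] Module.End k g)
        (LieAlgebra.ad k g : g →ₗ[k] Module.End k g)
  have hA : ∀ z, LinearMap.ker (A z) = cent k z.1 ⊓ cent k z.2 := fun z => LinearMap.ker_prod _ _
  have h1 := isOpen_finrank_ker_le (PolyMap.linear A) (Module.finrank k t)
  have h2 : Cirr k g t = commSet k g ∩
      {w | Module.finrank k (LinearMap.ker (A w)) ≤ Module.finrank k t}ᶜ := by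
    ext z
    simp only [Cirr, Set.mem_inter_iff, Set.mem_setOf_eq, Set.mem_compl_iff, not_le]
    rw [hA z]
  rw [h2]
  exact isClosed_commSet.inter h1.isClosed_compl

lemma RD.translates_sub (R : RD t) (i : Fin R.n) :
    adTranslates k g ((↑(kerRoot k g t (R.root i)) : Set g) ×ˢ
      (↑(kerRoot k g t (R.root i)) : Set g)) ⊆ Cirr k g t := by
  rintro _ ⟨u, hu, ⟨_, _⟩, ⟨⟨c, hc, rfl⟩, ⟨d, hd, rfl⟩⟩, rfl⟩
  have hc : R.root i c = 0 := hc
  have hd : R.root i d = 0 := hd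
  refine ⟨?_, ?_⟩
  · change ⁅(u : Module.End k g) (c : g), (u : Module.End k g) (d : g)⁆ = 0
    rw [← adj_lie hu, R.ab, map_zero]
  · change _ < Module.finrank k ↥(cent k ((u : Module.End k g) (c : g)) ⊓
      cent k ((u : Module.End k g) (d : g)))
    have hcent : (cent k (c : g) ⊓ cent k (d : g)).map (u : Module.End k g)
        ≤ cent k ((u : Module.End k g) (c : g)) ⊓ cent k ((u : Module.End k g) (d : g)) := by
      rintro _ ⟨v, ⟨h1, h2⟩, rfl⟩
      have h1 : ⁅(c : g), v⁆ = 0 := h1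
      have h2 : ⁅(d : g), v⁆ = 0 := h2
      refine ⟨?_, ?_⟩
      · change ⁅(u : Module.End k g) (c : g), (u : Module.End k g) v⁆ = 0
        rw [← adj_lie hu, h1, map_zero]
      · change ⁅(u : Module.End k g) (d : g), (u : Module.End k g) v⁆ = 0
        rw [← adj_lie hu, h2, map_zero]
    have h3 := R.card_le (cent k (c : g) ⊓ cent k (d : g))
      (fun x hx => ⟨R.ab c ⟨x, hx⟩, R.ab d ⟨x, hx⟩⟩) {i} (by
        intro j hj
        obtain rfl := Finset.mem_singleton.mp hj
        refine ⟨?_, ?_⟩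
        · change ⁅(c : g), R.e j⁆ = 0
          rw [← lie_skew, R.e_lie, hc]; simp
        · change ⁅(d : g), R.e j⁆ = 0
          rw [← lie_skew, R.e_lie, hd]; simp)
    rw [Finset.card_singleton] at h3
    have h4 := Submodule.finrank_mono hcent
    rw [finrank_map_unit] at h4
    lia

/-- The candidate component. -/
def RD.Z (R : RD t) (i : Fin R.n) : Set (g × g) :=
  @closure _ (zar k (g × g)) (Set.range (R.Phi i))

lemma RD.Z_sub (R : RD t) (i : Fin R.n) : R.Z i ⊆ Cirr k g t := by
  letI := zar k (g × g)
  rw [RD.Z, ← R.closure_eq]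
  exact closure_minimal (R.translates_sub i) isClosed_Cirr

/-- The open set on which the classification of irregular pairs is available. -/
def goodSet (t : LieSubalgebra k g) : Set (g × g) :=
  {z | Module.finrank k (nulls z.1 : Submodule k g) ≤ Module.finrank k t + 2}

lemma isOpen_goodSet : IsOpen[zar k (g × g)] (goodSet t) :=
  isOpen_finrank_ker_le (((ad_poly (k := k) (g := g)).comp
    (PolyMap.linear (LinearMap.fst k g g))).pow_end (Module.finrank k g)) _

lemma RD.exists_good (R : RD t) (i : Fin R.n) : ∃ z ∈ R.Z i, z ∈ goodSet t := by
  letI := zar k (g × g)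
  obtain ⟨c, hc, hc'⟩ := R.exists_ker i
  refine ⟨((c : g), (c : g)), ?_, ?_⟩
  · rw [RD.Z, ← R.closure_eq]
    refine subset_closure ⟨1, one_mem _, ((c : g), (c : g)), ⟨⟨c, hc, rfl⟩, ⟨c, hc, rfl⟩⟩, rfl⟩
  · have hn := R.finrank_eq
    have hi := i.2
    have h1 := R.finrank_ker_pow c {i, R.neg i} (Module.finrank k g) (by lia) (by
      intro j hj
      simp only [Finset.mem_insert, Finset.mem_singleton, not_or] at hj
      exact hc' j hj.1 hj.2)
    have h2 : ({i, R.neg i} : Finset (Fin R.n)).card ≤ 2 := Finset.card_le_two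
    change Module.finrank k (LinearMap.ker (LieAlgebra.ad k g (c : g) ^ Module.finrank k g)) ≤ _
    lia

lemma RD.Z_closed (R : RD t) (i : Fin R.n) : IsClosed[zar k (g × g)] (R.Z i) := by
  letI := zar k (g × g)
  exact isClosed_closure

lemma RD.Z_max (hred : LieAlgebra.radical k g = LieAlgebra.center k g) (R : RD t) (i : Fin R.n)
    (Z' : Set (g × g)) (hZ : R.Z i ⊆ Z') (hZ' : Z' ⊆ Cirr k g t)
    (hirr : @IsIrreducible (g × g) (zar k (g × g)) Z') : Z' = R.Z i := by
  classical
  letI := zar k (g × g)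
  have hcov := isIrreducible_iff_sUnion_isClosed.mp hirr
    (insert (goodSet t)ᶜ (Finset.univ.image fun j => R.Z j)) (by
      intro z hz
      rcases Finset.mem_insert.mp hz with rfl | hz
      · exact isOpen_goodSet.isClosed_compl
      · obtain ⟨j, -, rfl⟩ := Finset.mem_image.mp hz
        exact R.Z_closed j) (by
      intro z hz
      by_cases hg : z ∈ goodSet t
      · obtain ⟨j, hj⟩ := irr_mem hred R z (hZ' hz) hg
        refine ⟨R.Z j, by simp, ?_⟩
        rw [RD.Z, ← R.closure_eq]
        exact subset_closure hj
      · exact ⟨(goodSet t)ᶜ, by simp, hg⟩)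
  obtain ⟨y, hy, hsub⟩ := hcov
  rcases Finset.mem_insert.mp hy with rfl | hy
  · obtain ⟨z, hz, hg⟩ := R.exists_good i
    exact absurd hg (hsub (hZ hz))
  · obtain ⟨j, -, rfl⟩ := Finset.mem_image.mp hy
    have hd : Module.finrank k (R.W j) = Module.finrank k (R.W i) := by
      have h1 := R.finrank_W i
      have h2 := R.finrank_W j
      lia
    have := eq_of_dim_eq (R.Z_closed i) (R.Z_closed j) (R.closure_irr j) (hZ.trans hsub)
      (R.closure_dim i) (by rw [← hd]; exact R.closure_dim j)
    exact subset_antisymm (this ▸ hsub) hZ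

lemma RD.Z_dim (R : RD t) (i : Fin R.n) : dimSet k (g × g) (R.Z i) + 4 =
    (((Module.finrank k g + Module.finrank k ↥t : ℕ) : ℕ∞) : WithBot ℕ∞) := by
  rw [RD.Z, R.closure_dim, ← R.finrank_W i]
  norm_cast

end CV
end P13

section Final
variable {k : Type*} [Field k] [IsAlgClosed k] [CharZero k]
variable {g : Type*} [LieRing g] [LieAlgebra k g] [FiniteDimensional k g]

lemma CV.main
    (hred : LieAlgebra.radical k g = LieAlgebra.center k g)
    (t : LieSubalgebra k g) (ht : t.IsCartanSubalgebra)
    (α : Module.Dual k ↥t) (hα : IsRootOf k g t α) :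
    (((Module.finrank k g + Module.finrank k ↥t : ℕ) : ℕ∞) : WithBot ℕ∞)
        ≤ CV.dimSet k (g × g) (Cirr k g t) + 4 ∧
      ∀ Z : Set (g × g),
        Z = @closure (g × g) (CV.zar k (g × g))
              (adTranslates k g
                ((↑(kerRoot k g t α) : Set g) ×ˢ (↑(kerRoot k g t α) : Set g))) →
        Z ⊆ Cirr k g t ∧
          @IsIrreducible (g × g) (CV.zar k (g × g)) Z ∧
          (∀ Z' : Set (g × g), Z ⊆ Z' → Z' ⊆ Cirr k g t →
            @IsIrreducible (g × g) (CV.zar k (g × g)) Z' → Z' = Z) ∧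
          CV.dimSet k (g × g) Z + 4
            = (((Module.finrank k g + Module.finrank k ↥t : ℕ) : ℕ∞) : WithBot ℕ∞) := by
  obtain ⟨R⟩ := CV.reductive_RD hred t ht
  obtain ⟨i, rfl⟩ := R.of_isRootOf hα
  refine ⟨?_, ?_⟩
  · rw [← R.Z_dim i]
    gcongr
    exact CV.dimSet_mono (R.Z_sub i)
  · rintro Z hZ
    have hZ' : Z = R.Z i := hZ.trans (R.closure_eq i)
    subst hZ'
    exact ⟨R.Z_sub i, R.closure_irr i, R.Z_max hred i, R.Z_dim i⟩

end Final

/-- The irregular locus of the commuting variety has codimension at most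
four:  `dim C^irr ≥ dim C - 4`.  In fact, for a Cartan subalgebra `t` of `g` and any root
`α` of `g` with respect to `t`, the (Zariski) closure of the union of the adjoint-group
translates of `Ker α × Ker α ⊆ t × t` is an irreducible component of `C^irr` of dimension
exactly `dim g + rk g - 4`. -/
theorem irregular_codim_le_four
    (hred : LieAlgebra.radical k g = LieAlgebra.center k g) (hnc : ¬IsLieAbelian g)
    (t : LieSubalgebra k g) (ht : t.IsCartanSubalgebra)
    (α : Module.Dual k ↥t) (hα : IsRootOf k g t α) :
    (((Module.finrank k g + Module.finrank k ↥t : ℕ) : ℕ∞) : WithBot ℕ∞)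
        ≤ CV.dimSet k (g × g) (Cirr k g t) + 4 ∧
      ∀ Z : Set (g × g),
        Z = @closure (g × g) (CV.zar k (g × g))
              (adTranslates k g
                ((↑(kerRoot k g t α) : Set g) ×ˢ (↑(kerRoot k g t α) : Set g))) →
        Z ⊆ Cirr k g t ∧
          @IsIrreducible (g × g) (CV.zar k (g × g)) Z ∧
          (∀ Z' : Set (g × g), Z ⊆ Z' → Z' ⊆ Cirr k g t →
            @IsIrreducible (g × g) (CV.zar k (g × g)) Z' → Z' = Z) ∧
          CV.dimSet k (g × g) Z + 4
            = (((Module.finrank k g + Module.finrank k ↥t : ℕ) : ℕ∞) : WithBot ℕ∞) := by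
  exact CV.main hred t ht α hα
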